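/- Let N ≥ 2, a > 0, b > 0, 1* := N/(N-1), E := (1/(N^{N-1} ω_{N-1}))^{1/(N-1)}. Define α_c := sup { ‖u‖_1 / (E - ‖u‖_{1*}^{1*}) : u ∈ BV(ℝ^N), ‖u‖_{TV}^a + ‖u‖_1^b = 1 } and h(t) := (1+t)^{1*/a - 1/b} / ((1+t)^{1*/a} - t^{1*/a}) for t > 0. Then α_c = (1/E) sup_{t>0} h(t). Moreover for u on the constraint set, E - ‖u‖_{1*}^{1*} ≥ E(1 - ‖u‖_{TV}^{1*}) > 0. -/

import Mathlib

open MeasureTheory Real Filter Topology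

noncomputable section

abbrev Euc (N : ℕ) := EuclideanSpace ℝ (Fin N)

/-- The set of values `∫ u div ψ` over admissible test vector fields. -/
def TVSet (N : ℕ) (u : Euc N → ℝ) : Set ℝ :=
  { r | ∃ ψ : Euc N → Euc N, ContDiff ℝ 1 ψ ∧ HasCompactSupport ψ ∧
      (∀ x, ‖ψ x‖ ≤ 1) ∧
      r = ∫ x, u x * (∑ i, fderiv ℝ (fun y => ψ y i) x (EuclideanSpace.single i 1)) }

/-- Total variation of `u`. -/
def tv (N : ℕ) (u : Euc N → ℝ) : ℝ := sSup (TVSet N u)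

/-- `u` is a function of bounded variation on `ℝ^N`. -/
def MemBV (N : ℕ) (u : Euc N → ℝ) : Prop :=
  Integrable u ∧ BddAbove (TVSet N u)

/-- The `L¹` norm. -/
def nrm1 (N : ℕ) (u : Euc N → ℝ) : ℝ := (eLpNorm u 1 volume).toReal

/-- The `L^q` norm, `q` a real exponent. -/
def nrmq (N : ℕ) (q : ℝ) (u : Euc N → ℝ) : ℝ :=
  (eLpNorm u (ENNReal.ofReal q) volume).toReal

/-- Surface area `ω_{N-1}` of the unit sphere in `ℝ^N`, as `N` times the
volume of the unit ball. -/
def omegaS (N : ℕ) : ℝ := N * (volume (Metric.ball (0 : Euc N) 1)).toReal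

/-- The Gagliardo–Nirenberg ratio `‖u‖_q^q / (‖u‖_1^{q-(q-1)N} ‖u‖_{TV}^{(q-1)N})`. -/
def ratioQ (N : ℕ) (q : ℝ) (u : Euc N → ℝ) : ℝ :=
  nrmq N q u ^ q / (nrm1 N u ^ (q - (q-1)*N) * tv N u ^ ((q-1)*(N:ℝ)))

/-- The best constant `E_q` on `BV(ℝ^N)`. -/
def EqSup (N : ℕ) (q : ℝ) : ℝ :=
  sSup { r | ∃ u : Euc N → ℝ, MemBV N u ∧ u ≠ 0 ∧ r = ratioQ N q u }

/-!
The sharp Sobolev inequality `N ω^(1/N) ‖u‖_{1*} ≤ ‖u‖_{TV}`, where `ω` is the volume of the unit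
ball, follows from the Brunn–Minkowski inequality: expanding the superlevel sets of a smooth
function by a small ball of radius `ε` increases its values by at most `ε ‖∇u‖` to first order,
while each superlevel set `A` gains at least `ε N ω^(1/N) |A|^(1/1*)`; mollification and cut-offs
carry the inequality over to `BV`. Since `E = (N ω^(1/N))^(-1*)`, this is the lower bound for the
denominator. Multiples of indicators of balls attain equality and realize every pair of positive
values `(‖u‖_{TV}, ‖u‖₁)`, so the supremum over the constraint set is that of
`‖u‖₁ / (E (1 - ‖u‖_{TV}^{1*}))`, which the substitution `t = ‖u‖_{TV}^a / ‖u‖₁^b` turns into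
`h(t) / E`.
-/

open scoped ENNReal NNReal Pointwise
open Metric Set Module

/-! ### The Prékopa–Leindler inequality -/

theorem lintegral_eq_lintegral_meas_ofReal_lt {α : Type*} [MeasurableSpace α] (μ : Measure α)
    {f : α → ℝ≥0∞} (hf : Measurable f) :
    ∫⁻ x, f x ∂μ = ∫⁻ t in Ioi (0 : ℝ), μ {x | ENNReal.ofReal t < f x} := by
  by_cases hfin : ∀ᵐ x ∂μ, f x < ∞
  · calc ∫⁻ x, f x ∂μ
        = ∫⁻ x, ENNReal.ofReal (f x).toReal ∂μ := by
          refine lintegral_congr_ae ?_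
          filter_upwards [hfin] with x hx using (ENNReal.ofReal_toReal hx.ne).symm
      _ = ∫⁻ t in Ioi (0 : ℝ), μ {x | t < (f x).toReal} :=
          lintegral_eq_lintegral_meas_lt μ (.of_forall fun _ => ENNReal.toReal_nonneg) (by fun_prop)
      _ = ∫⁻ t in Ioi (0 : ℝ), μ {x | ENNReal.ofReal t < f x} := by
          refine setLIntegral_congr_fun measurableSet_Ioi fun t ht => measure_congr ?_
          filter_upwards [hfin] with x hx using
            propext (ENNReal.ofReal_lt_iff_lt_toReal (mem_Ioi.1 ht).le hx.ne).symm
  · have htop : μ {x | f x = ∞} ≠ 0 := by simpa [ae_iff] using hfin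
    have hle : ∫⁻ _ in Ioi (0 : ℝ), μ {x | f x = ∞}
        ≤ ∫⁻ t in Ioi (0 : ℝ), μ {x | ENNReal.ofReal t < f x} :=
      lintegral_mono fun t => measure_mono fun x hx => by
        simp only [mem_ofPred_eq] at hx ⊢
        simp [hx]
    rw [setLIntegral_const, Real.volume_Ioi, ENNReal.mul_top htop, top_le_iff] at hle
    rw [hle]
    exact not_not.1 fun h => hfin (ae_lt_top hf h)

-- Translated copies of `K` and `L` sit in `K + L` and meet in the single point `max K + min L`.
theorem volume_add_volume_le_of_isCompact {K L : Set ℝ} (hK : IsCompact K) (hL : IsCompact L)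
    (hKn : K.Nonempty) (hLn : L.Nonempty) : volume K + volume L ≤ volume (K + L) := by
  obtain ⟨M, hM, hKM⟩ := hK.exists_isGreatest hKn
  obtain ⟨m, hm, hmL⟩ := hL.exists_isLeast hLn
  have hdisj : AEDisjoint volume (K + {m}) ({M} + L) := by
    refine measure_mono_null (t := {M + m}) ?_ (by simp)
    rintro _ ⟨⟨x, hx, _, rfl, rfl⟩, ⟨_, rfl, y, hy, h⟩⟩
    have := hKM hx
    have := hmL hy
    simp only [mem_singleton_iff] at *
    linarith
  calc volume K + volume L
      = volume (K + {m}) + volume ({M} + L) := by simp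
    _ = volume ((K + {m}) ∪ ({M} + L)) :=
        (measure_union₀ (isCompact_singleton.add hL).measurableSet.nullMeasurableSet hdisj).symm
    _ ≤ volume (K + L) := measure_mono <| union_subset
        (add_subset_add_left <| by simpa) (add_subset_add_right <| by simpa)

theorem volume_add_volume_le {A B : Set ℝ} (hA : MeasurableSet A) (hB : MeasurableSet B)
    (hAn : A.Nonempty) (hBn : B.Nonempty) : volume A + volume B ≤ volume (A + B) := by
  obtain ⟨x, hx⟩ := hAn
  obtain ⟨y, hy⟩ := hBn
  simp only [hA.measure_eq_iSup_isCompact, hB.measure_eq_iSup_isCompact, iSup_and']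
  refine ENNReal.biSup_add_biSup_le' ⟨∅, by simp⟩ ⟨∅, by simp⟩ ?_
  rintro K ⟨hKA, hK⟩ L ⟨hLB, hL⟩
  calc volume K + volume L
      ≤ volume (insert x K) + volume (insert y L) := by
        gcongr <;> exact subset_insert ..
    _ ≤ volume (insert x K + insert y L) :=
        volume_add_volume_le_of_isCompact (hK.insert x) (hL.insert y) (by simp) (by simp)
    _ ≤ volume (A + B) :=
        measure_mono (add_subset_add (insert_subset hx hKA) (insert_subset hy hLB))

/-- A measure `μ` on a real vector space satisfies the Prékopa–Leindler inequality: the functional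
form of the Brunn–Minkowski inequality. Weights are a pair of positive reals with sum `1`. -/
def IsPrekopaLeindler {E : Type*} [AddCommMonoid E] [Module ℝ E] [MeasurableSpace E]
    (μ : Measure E) : Prop :=
  ∀ ⦃a b : ℝ⦄, 0 < a → 0 < b → a + b = 1 → ∀ ⦃f g h : E → ℝ≥0∞⦄,
    Measurable f → Measurable g → Measurable h →
    (∀ x y, f x ^ a * g y ^ b ≤ h (a • x + b • y)) →
    (∫⁻ x, f x ∂μ) ^ a * (∫⁻ x, g x ∂μ) ^ b ≤ ∫⁻ x, h x ∂μ

theorem rpow_mul_rpow_le_ofReal_mul_add {a b : ℝ} (ha : 0 < a) (hb : 0 < b) (hab : a + b = 1)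
    (x y : ℝ≥0∞) : x ^ a * y ^ b ≤ ENNReal.ofReal a * x + ENNReal.ofReal b * y := by
  have hconj : a⁻¹.HolderConjugate b⁻¹ := ⟨by simpa, by positivity, by positivity⟩
  have h := ENNReal.young_inequality (x ^ a) (y ^ b) hconj
  rwa [ENNReal.rpow_rpow_inv ha.ne', ENNReal.rpow_rpow_inv hb.ne', ENNReal.ofReal_inv_of_pos ha,
    ENNReal.ofReal_inv_of_pos hb, div_eq_mul_inv, div_eq_mul_inv, inv_inv, inv_inv, mul_comm x,
    mul_comm y] at h

theorem measurable_meas_ofReal_lt {α : Type*} [MeasurableSpace α] (μ : Measure α) (f : α → ℝ≥0∞) :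
    Measurable fun t : ℝ => μ {x | ENNReal.ofReal t < f x} :=
  Antitone.measurable fun _ _ hst =>
    measure_mono fun _ hx => (ENNReal.ofReal_le_ofReal hst).trans_lt hx

-- Superlevel sets satisfy `a • {f > t} + b • {g > t} ⊆ {h > t}`, and `{f > t}`, `{g > t}` become
-- empty for the same `t`, so the one-dimensional Brunn–Minkowski inequality can be integrated.
theorem ofReal_mul_lintegral_add_le_of_iSup_eq_one {a b : ℝ} (ha : 0 < a) (hb : 0 < b)
    (hab : a + b = 1) {f g h : ℝ → ℝ≥0∞} (hf : Measurable f) (hg : Measurable g)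
    (hh : Measurable h) (hf1 : ⨆ x, f x = 1) (hg1 : ⨆ x, g x = 1)
    (H : ∀ x y, f x ^ a * g y ^ b ≤ h (a • x + b • y)) :
    ENNReal.ofReal a * (∫⁻ x, f x) + ENNReal.ofReal b * ∫⁻ x, g x ≤ ∫⁻ x, h x := by
  simp only [lintegral_eq_lintegral_meas_ofReal_lt volume hf,
    lintegral_eq_lintegral_meas_ofReal_lt volume hg,
    lintegral_eq_lintegral_meas_ofReal_lt volume hh]
  rw [← lintegral_const_mul _ (measurable_meas_ofReal_lt volume f),
    ← lintegral_const_mul _ (measurable_meas_ofReal_lt volume g),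
    ← lintegral_add_left ((measurable_meas_ofReal_lt volume f).const_mul _)]
  refine setLIntegral_mono (measurable_meas_ofReal_lt volume h) fun t ht => ?_
  replace ht : 0 < t := ht
  rcases lt_or_ge t 1 with ht1 | ht1
  · have hsub : a • {x | ENNReal.ofReal t < f x} + b • {x | ENNReal.ofReal t < g x}
        ⊆ {x | ENNReal.ofReal t < h x} := by
      rintro _ ⟨_, ⟨x, hx, rfl⟩, _, ⟨y, hy, rfl⟩, rfl⟩
      calc ENNReal.ofReal t = ENNReal.ofReal t ^ a * ENNReal.ofReal t ^ b := by
            rw [← ENNReal.rpow_add _ _ (by simpa using ht) (by simp), hab, ENNReal.rpow_one]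
        _ < f x ^ a * g y ^ b :=
            ENNReal.mul_lt_mul (ENNReal.rpow_lt_rpow hx ha) (ENNReal.rpow_lt_rpow hy hb)
        _ ≤ h (a • x + b • y) := H x y
    have hlt : ENNReal.ofReal t < 1 := by simpa using ht1
    have hvol : ∀ {c : ℝ}, 0 < c → ∀ s : Set ℝ, volume (c • s) = ENNReal.ofReal c * volume s :=
      fun hc s => by simp [Measure.addHaar_smul, abs_of_pos hc]
    have hne : ∀ {k : ℝ → ℝ≥0∞}, ⨆ x, k x = 1 → {x | ENNReal.ofReal t < k x}.Nonempty := fun hk =>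
      have ⟨x, hx⟩ := lt_iSup_iff.1 (hk ▸ hlt)
      ⟨x, hx⟩
    rw [← hvol ha, ← hvol hb]
    refine (volume_add_volume_le ?_ ?_ ?_ ?_).trans (measure_mono hsub)
    · exact (measurableSet_lt measurable_const hf).const_smul_of_ne_zero ha.ne'
    · exact (measurableSet_lt measurable_const hg).const_smul_of_ne_zero hb.ne'
    · exact (hne hf1).smul_set
    · exact (hne hg1).smul_set
  · have hempty : ∀ {k : ℝ → ℝ≥0∞}, ⨆ x, k x = 1 → {x | ENNReal.ofReal t < k x} = ∅ :=
      fun hk => eq_empty_of_forall_notMem fun x hx =>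
        hx.not_ge (((le_iSup _ x).trans_eq hk).trans (by simpa using ht1))
    simp [hempty hf1, hempty hg1]

theorem lintegral_rpow_mul_le_of_iSup_ne_top {a b : ℝ} (ha : 0 < a) (hb : 0 < b)
    (hab : a + b = 1) {f g h : ℝ → ℝ≥0∞} (hf : Measurable f) (hg : Measurable g)
    (hh : Measurable h) (hfb : ⨆ x, f x ≠ ∞) (hgb : ⨆ x, g x ≠ ∞)
    (H : ∀ x y, f x ^ a * g y ^ b ≤ h (a • x + b • y)) :
    (∫⁻ x, f x) ^ a * (∫⁻ x, g x) ^ b ≤ ∫⁻ x, h x := by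
  set c := ⨆ x, f x with hc
  set d := ⨆ x, g x with hd
  rcases eq_or_ne c 0 with hc0 | hc0
  · simp [ENNReal.iSup_eq_zero.1 (hc ▸ hc0), ha]
  rcases eq_or_ne d 0 with hd0 | hd0
  · simp [ENNReal.iSup_eq_zero.1 (hd ▸ hd0), hb]
  have hca : c ^ a ≠ 0 ∧ c ^ a ≠ ∞ := by simp [hc0, hfb]
  have hdb : d ^ b ≠ 0 ∧ d ^ b ≠ ∞ := by simp [hd0, hgb]
  have hinv : (c ^ a * d ^ b)⁻¹ = c⁻¹ ^ a * d⁻¹ ^ b := by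
    rw [ENNReal.mul_inv (.inl hca.1) (.inl hca.2), ENNReal.inv_rpow, ENNReal.inv_rpow]
  have hnorm : (c⁻¹ * ∫⁻ x, f x) ^ a * (d⁻¹ * ∫⁻ x, g x) ^ b
      ≤ (c ^ a * d ^ b)⁻¹ * ∫⁻ x, h x := by
    refine (rpow_mul_rpow_le_ofReal_mul_add ha hb hab _ _).trans ?_
    simp only [← lintegral_const_mul _ hf, ← lintegral_const_mul _ hg, ← lintegral_const_mul _ hh]
    refine ofReal_mul_lintegral_add_le_of_iSup_eq_one ha hb hab (by fun_prop) (by fun_prop)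
      (by fun_prop) ?_ ?_ fun x y => ?_
    · rw [← ENNReal.mul_iSup, ENNReal.inv_mul_cancel hc0 hfb]
    · rw [← ENNReal.mul_iSup, ENNReal.inv_mul_cancel hd0 hgb]
    · rw [ENNReal.mul_rpow_of_nonneg _ _ ha.le, ENNReal.mul_rpow_of_nonneg _ _ hb.le,
        mul_mul_mul_comm, ← hinv]
      gcongr
      exact H x y
  rwa [ENNReal.mul_rpow_of_nonneg _ _ ha.le, ENNReal.mul_rpow_of_nonneg _ _ hb.le,
    mul_mul_mul_comm, ← hinv, ENNReal.mul_le_mul_iff_right] at hnorm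
  · exact ENNReal.inv_ne_zero.2 (ENNReal.mul_ne_top hca.2 hdb.2)
  · exact ENNReal.inv_ne_top.2 (mul_ne_zero hca.1 hdb.1)

theorem tendsto_lintegral_min_natCast {α : Type*} [MeasurableSpace α] (μ : Measure α)
    {f : α → ℝ≥0∞} (hf : Measurable f) :
    Tendsto (fun n : ℕ => ∫⁻ x, min (f x) n ∂μ) atTop (𝓝 (∫⁻ x, f x ∂μ)) := by
  refine lintegral_tendsto_of_tendsto_of_monotone (fun n => by fun_prop)
    (.of_forall fun x m n hmn => ?_) (.of_forall fun x => ?_)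
  · dsimp only
    gcongr
  · simpa using (tendsto_const_nhds (x := f x)).min ENNReal.tendsto_nat_nhds_top

theorem isPrekopaLeindler_volume_real : IsPrekopaLeindler (volume : Measure ℝ) := by
  intro a b ha hb hab f g h hf hg hh H
  rcases eq_or_ne (∫⁻ x, f x) 0 with hf0 | hf0
  · simp [hf0, ha]
  rcases eq_or_ne (∫⁻ x, g x) 0 with hg0 | hg0
  · simp [hg0, hb]
  have hlim := ENNReal.Tendsto.mul
    ((tendsto_lintegral_min_natCast volume hf).ennrpow_const a) (.inl (by simp [hf0, ha.le]))
    ((tendsto_lintegral_min_natCast volume hg).ennrpow_const b) (.inl (by simp [hg0, hb.le]))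
  have hbdd : ∀ (k : ℝ → ℝ≥0∞) (n : ℕ), ⨆ x, min (k x) n ≠ ∞ := fun k n =>
    ((iSup_le fun x => min_le_right _ _).trans_lt (ENNReal.natCast_lt_top n)).ne
  refine le_of_tendsto' hlim fun n => lintegral_rpow_mul_le_of_iSup_ne_top ha hb hab
    (by fun_prop) (by fun_prop) hh (hbdd f n) (hbdd g n) fun x y => le_trans ?_ (H x y)
  gcongr <;> exact min_le_left _ _

namespace IsPrekopaLeindler

variable {E F : Type*} [MeasurableSpace E] [MeasurableSpace F]

theorem prod [AddCommMonoid E] [Module ℝ E] [AddCommMonoid F] [Module ℝ F] {μ : Measure E}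
    {ν : Measure F} [SFinite μ] [SFinite ν] (hμ : IsPrekopaLeindler μ)
    (hν : IsPrekopaLeindler ν) : IsPrekopaLeindler (μ.prod ν) := by
  intro a b ha hb hab f g h hf hg hh H
  rw [lintegral_prod _ hf.aemeasurable, lintegral_prod _ hg.aemeasurable,
    lintegral_prod _ hh.aemeasurable]
  exact hμ ha hb hab hf.lintegral_prod_right' hg.lintegral_prod_right' hh.lintegral_prod_right'
    fun x x' => hν ha hb hab (by fun_prop) (by fun_prop) (by fun_prop)
      fun y y' => H (x, y) (x', y')

theorem map [AddCommMonoid E] [Module ℝ E] [AddCommMonoid F] [Module ℝ F] {μ : Measure E}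
    (hμ : IsPrekopaLeindler μ) (e : E →ₗ[ℝ] F) (he : Measurable e) :
    IsPrekopaLeindler (μ.map e) := by
  intro a b ha hb hab f g h hf hg hh H
  rw [lintegral_map hf he, lintegral_map hg he, lintegral_map hh he]
  refine hμ ha hb hab (hf.comp he) (hg.comp he) (hh.comp he) fun x y => ?_
  simpa using H (e x) (e y)

theorem smul [AddCommMonoid E] [Module ℝ E] {μ : Measure E} (hμ : IsPrekopaLeindler μ)
    (c : ℝ≥0∞) : IsPrekopaLeindler (c • μ) := by
  intro a b ha hb hab f g h hf hg hh H
  simp only [lintegral_smul_measure, smul_eq_mul]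
  calc (c * ∫⁻ x, f x ∂μ) ^ a * (c * ∫⁻ x, g x ∂μ) ^ b
      = c ^ (a + b) * ((∫⁻ x, f x ∂μ) ^ a * (∫⁻ x, g x ∂μ) ^ b) := by
        rw [ENNReal.mul_rpow_of_nonneg _ _ ha.le, ENNReal.mul_rpow_of_nonneg _ _ hb.le,
          ENNReal.rpow_add_of_nonneg _ _ ha.le hb.le]
        ring
    _ ≤ c * ∫⁻ x, h x ∂μ := by
        rw [hab, ENNReal.rpow_one]
        gcongr
        exact hμ ha hb hab hf hg hh H

theorem volume_pi : ∀ n : ℕ, IsPrekopaLeindler (volume : Measure (Fin n → ℝ))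
  | 0 => by
    intro a b _ _ _ f g h _ _ _ H
    have heval : ∀ k : (Fin 0 → ℝ) → ℝ≥0∞, ∫⁻ x, k x = k 0 := fun k => by
      rw [MeasureTheory.volume_pi, Measure.pi_of_empty _ 0, lintegral_dirac]
    simpa [heval] using H 0 0
  | n + 1 => by
    let e := MeasurableEquiv.piFinSuccAbove (fun _ : Fin (n + 1) => ℝ) 0
    have he : ⇑(Fin.consLinearEquiv ℝ fun _ : Fin (n + 1) => ℝ).toLinearMap = e.symm :=
      congrArg DFunLike.coe (Fin.insertNthEquiv_zero fun _ => ℝ).symm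
    have h := (isPrekopaLeindler_volume_real.prod (volume_pi n)).map
      (Fin.consLinearEquiv ℝ fun _ : Fin (n + 1) => ℝ).toLinearMap (he ▸ e.symm.measurable)
    rwa [he, ← Measure.volume_eq_prod,
      (volume_preserving_piFinSuccAbove (fun _ => ℝ) 0).symm.map_eq] at h

theorem of_isAddHaarMeasure [NormedAddCommGroup E] [NormedSpace ℝ E] [FiniteDimensional ℝ E]
    [BorelSpace E] (μ : Measure E) [μ.IsAddHaarMeasure] : IsPrekopaLeindler μ := by
  let e : (Fin (finrank ℝ E) → ℝ) ≃L[ℝ] E := ContinuousLinearEquiv.ofFinrankEq (by simp)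
  have := e.isAddHaarMeasure_map volume
  rw [Measure.isAddLeftInvariant_eq_smul μ (volume.map e)]
  exact ((volume_pi _).map e.toLinearMap e.continuous.measurable).smul _

theorem rpow_mul_rpow_le [AddCommMonoid E] [Module ℝ E] {μ : Measure E}
    (hμ : IsPrekopaLeindler μ) {a b : ℝ} (ha : 0 < a) (hb : 0 < b) (hab : a + b = 1) {A B : Set E}
    (hA : MeasurableSet A) (hB : MeasurableSet B) (hAB : MeasurableSet (a • A + b • B)) :
    μ A ^ a * μ B ^ b ≤ μ (a • A + b • B) := by
  have h := hμ ha hb hab (measurable_one.indicator hA) (measurable_one.indicator hB)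
    (measurable_one.indicator hAB) fun x y => ?_
  · simpa [lintegral_indicator_one, hA, hB, hAB] using h
  · by_cases hx : x ∈ A
    · by_cases hy : y ∈ B
      · simp [hx, hy, Set.add_mem_add (smul_mem_smul_set hx) (smul_mem_smul_set hy)]
      · simp [hy, hb]
    · simp [hx, ha]

end IsPrekopaLeindler

/-! ### The Brunn–Minkowski inequality -/

section BrunnMinkowski

variable {E : Type*} [NormedAddCommGroup E] [NormedSpace ℝ E] [FiniteDimensional ℝ E]
  [MeasurableSpace E] [BorelSpace E] (μ : Measure E) [μ.IsAddHaarMeasure]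

-- Dilating `A` and `B` by `(α + β) / α` and `(α + β) / β` gives them equal measure, so that the
-- multiplicative inequality `IsPrekopaLeindler.rpow_mul_rpow_le` loses nothing.
theorem ofReal_add_pow_finrank_le_measure_add {A B : Set E} (hA : IsOpen A) (hB : IsOpen B)
    {α β : ℝ} (hα : 0 < α) (hβ : 0 < β) (hAα : μ A = ENNReal.ofReal (α ^ finrank ℝ E))
    (hBβ : μ B = ENNReal.ofReal (β ^ finrank ℝ E)) :
    ENNReal.ofReal (α + β) ^ finrank ℝ E ≤ μ (A + B) := by
  have ha : 0 < α / (α + β) := by positivity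
  have hb : 0 < β / (α + β) := by positivity
  have hab : α / (α + β) + β / (α + β) = 1 := by field_simp
  have hdil : ∀ {S : Set E} {r : ℝ}, 0 < r → μ S = ENNReal.ofReal (r ^ finrank ℝ E) →
      μ ((r / (α + β))⁻¹ • S) = ENNReal.ofReal (α + β) ^ finrank ℝ E := by
    intro S r hr hS
    rw [Measure.addHaar_smul, hS, ← ENNReal.ofReal_mul (abs_nonneg _),
      ← ENNReal.ofReal_pow (by positivity), abs_of_pos (by positivity), ← mul_pow]
    congr 2
    field_simp
  have hBM := (IsPrekopaLeindler.of_isAddHaarMeasure μ).rpow_mul_rpow_le ha hb hab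
    (hA.smul₀ (inv_ne_zero ha.ne')).measurableSet (hB.smul₀ (inv_ne_zero hb.ne')).measurableSet
    (by simpa only [smul_inv_smul₀ ha.ne', smul_inv_smul₀ hb.ne'] using hA.add_right.measurableSet)
  rwa [hdil hα hAα, hdil hβ hBβ, smul_inv_smul₀ ha.ne', smul_inv_smul₀ hb.ne',
    ← ENNReal.rpow_add_of_nonneg _ _ ha.le hb.le, hab, ENNReal.rpow_one] at hBM

theorem measure_rpow_add_measure_rpow_le [Nontrivial E] {A B : Set E} (hA : IsOpen A)
    (hB : IsOpen B) (hAn : A.Nonempty) (hBn : B.Nonempty) :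
    μ A ^ (finrank ℝ E : ℝ)⁻¹ + μ B ^ (finrank ℝ E : ℝ)⁻¹ ≤ μ (A + B) ^ (finrank ℝ E : ℝ)⁻¹ := by
  set n := finrank ℝ E
  have hn : n ≠ 0 := finrank_pos.ne'
  have hn' : (0 : ℝ) < (n : ℝ)⁻¹ := by positivity
  have hAle : μ A ≤ μ (A + B) := by
    obtain ⟨y, hy⟩ := hBn
    calc μ A = μ (A + {y}) := by simp
      _ ≤ μ (A + B) := measure_mono (add_subset_add_left (by simpa))
  have hBle : μ B ≤ μ (A + B) := by
    obtain ⟨x, hx⟩ := hAn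
    calc μ B = μ ({x} + B) := by simp
      _ ≤ μ (A + B) := measure_mono (add_subset_add_right (by simpa))
  rcases eq_or_ne (μ (A + B)) ∞ with htop | htop
  · simp [htop, hn']
  have hroot : ∀ {S : Set E}, IsOpen S → S.Nonempty → μ S ≠ ∞ →
      ∃ r : ℝ, 0 < r ∧ μ S ^ (n : ℝ)⁻¹ = ENNReal.ofReal r ∧ μ S = ENNReal.ofReal (r ^ n) := by
    intro S hS hSn hSt
    have hpos : 0 < (μ S).toReal := ENNReal.toReal_pos (hS.measure_pos μ hSn).ne' hSt
    refine ⟨(μ S).toReal ^ (n : ℝ)⁻¹, by positivity, ?_, ?_⟩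
    · rw [← ENNReal.ofReal_rpow_of_pos hpos, ENNReal.ofReal_toReal hSt]
    · rw [Real.rpow_inv_natCast_pow hpos.le hn, ENNReal.ofReal_toReal hSt]
  obtain ⟨α, hα, hA_root, hAα⟩ := hroot hA hAn (ne_top_of_le_ne_top htop hAle)
  obtain ⟨β, hβ, hB_root, hBβ⟩ := hroot hB hBn (ne_top_of_le_ne_top htop hBle)
  rw [hA_root, hB_root, ← ENNReal.ofReal_add hα.le hβ.le, ENNReal.le_rpow_inv_iff (by positivity),
    ENNReal.rpow_natCast]
  exact ofReal_add_pow_finrank_le_measure_add μ hA hB hα hβ hAα hBβ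

/-- The constant `n * μ(B) ^ (1/n)`, `B` the unit ball and `n` the dimension, of the isoperimetric
inequality `n * μ(B) ^ (1/n) * μ(A) ^ (1 - 1/n) ≤ Per(A)`. -/
def isoperimetricConst : ℝ≥0∞ :=
  finrank ℝ E * μ (ball 0 1) ^ (finrank ℝ E : ℝ)⁻¹

theorem measure_add_isoperimetricConst_mul_le {p : ℝ}
    (hp : (finrank ℝ E : ℝ).HolderConjugate p) {A : Set E} (hA : IsOpen A) {ε : ℝ} (hε : 0 < ε) :
    μ A + ENNReal.ofReal ε * (isoperimetricConst μ * μ A ^ p⁻¹) ≤ μ (A + ball 0 ε) := by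
  rcases A.eq_empty_or_nonempty with rfl | hAn
  · simp [hp.symm.inv_pos]
  have : Nontrivial E := nontrivial_of_finrank_pos (R := ℝ) (by exact_mod_cast hp.pos)
  set n := finrank ℝ E
  have hn0 : (n : ℝ) ≠ 0 := hp.ne_zero
  set x := μ A ^ (n : ℝ)⁻¹ with hx
  set y := μ (ball (0 : E) ε) ^ (n : ℝ)⁻¹ with hy
  have hy_eq : y = ENNReal.ofReal ε * μ (ball (0 : E) 1) ^ (n : ℝ)⁻¹ := by
    rw [hy, Measure.addHaar_ball_of_pos μ _ hε, ENNReal.mul_rpow_of_nonneg _ _ (by positivity),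
      ENNReal.ofReal_pow hε.le, ← ENNReal.rpow_natCast, ENNReal.rpow_rpow_inv hn0]
  have hx_pow : x ^ n = μ A := by rw [← ENNReal.rpow_natCast, ENNReal.rpow_inv_rpow hn0]
  have hx_pred : x ^ (n - 1) = μ A ^ p⁻¹ := by
    rw [← ENNReal.rpow_natCast, hx, ← ENNReal.rpow_mul, Nat.cast_pred finrank_pos,
      ← hp.one_sub_inv, mul_sub, inv_mul_cancel₀ hn0, mul_one]
  calc μ A + ENNReal.ofReal ε * (isoperimetricConst μ * μ A ^ p⁻¹)
      = x ^ n + n * x ^ (n - 1) * y := by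
        rw [hx_pow, hx_pred, hy_eq, isoperimetricConst]
        ring
    _ ≤ (x + y) ^ n := pow_add_mul_le_add_pow_of_sq_nonneg zero_le zero_le zero_le zero_le n
    _ ≤ μ (A + ball 0 ε) := by
        rw [← ENNReal.rpow_natCast, ← ENNReal.le_rpow_inv_iff (by positivity)]
        exact measure_rpow_add_measure_rpow_le μ hA isOpen_ball hAn (nonempty_ball.2 hε)

end BrunnMinkowski

/-! ### The sharp Sobolev inequality for smooth functions -/

-- Writing a factor of `f ^ p = f ^ (p - 1) * f` as an integral over superlevel sets and applying
-- Hölder's inequality on each gives `∫ f ^ p ≤ (∫ f ^ p) ^ (1 / q) * ∫ μ {t < f} ^ (1 / p)`.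
theorem lintegral_rpow_le_lintegral_meas_ofReal_lt_rpow {α : Type*} [MeasurableSpace α]
    (μ : Measure α) {p q : ℝ} (hpq : p.HolderConjugate q) {f : α → ℝ≥0∞} (hf : Measurable f)
    (hfp : ∫⁻ x, f x ^ p ∂μ ≠ ∞) :
    (∫⁻ x, f x ^ p ∂μ) ^ p⁻¹ ≤ ∫⁻ t in Ioi (0 : ℝ), μ {x | ENNReal.ofReal t < f x} ^ p⁻¹ := by
  set J := ∫⁻ x, f x ^ p ∂μ with hJ
  rcases eq_or_ne J 0 with hJ0 | hJ0
  · simp [hJ0, hpq.inv_pos]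
  have hpow : (fun x => f x ^ p) = fun x => f x ^ (p - 1) * f x := funext fun x => by
    conv_rhs => rw [← ENNReal.rpow_one (f x), ← ENNReal.rpow_mul, one_mul,
      ← ENNReal.rpow_add_of_nonneg _ _ hpq.sub_one_pos.le zero_le_one, sub_add_cancel]
  have hholder : ∀ t : ℝ, μ.withDensity (fun x => f x ^ (p - 1)) {x | ENNReal.ofReal t < f x}
      ≤ μ {x | ENNReal.ofReal t < f x} ^ p⁻¹ * J ^ q⁻¹ := fun t => by
    have ht : MeasurableSet {x | ENNReal.ofReal t < f x} := measurableSet_lt measurable_const hf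
    calc μ.withDensity (fun x => f x ^ (p - 1)) {x | ENNReal.ofReal t < f x}
        = ∫⁻ x in {x | ENNReal.ofReal t < f x},
            ((1 : α → ℝ≥0∞) * fun x => f x ^ (p - 1)) x ∂μ := by
          rw [withDensity_apply _ ht, one_mul]
      _ ≤ (∫⁻ x in {x | ENNReal.ofReal t < f x}, (1 : α → ℝ≥0∞) x ^ p ∂μ) ^ (1 / p)
            * (∫⁻ x in {x | ENNReal.ofReal t < f x}, (f x ^ (p - 1)) ^ q ∂μ) ^ (1 / q) :=
          ENNReal.lintegral_mul_le_Lp_mul_Lq _ hpq aemeasurable_const (by fun_prop)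
      _ ≤ μ {x | ENNReal.ofReal t < f x} ^ p⁻¹ * J ^ q⁻¹ := by
          have := hpq.symm.inv_pos.le
          simp only [Pi.one_apply, ENNReal.one_rpow, setLIntegral_one, one_div, ← ENNReal.rpow_mul,
            hpq.sub_one_mul_conj, hJ]
          gcongr
          exact Measure.restrict_le_self
  have hJle : J ≤ (∫⁻ t in Ioi (0 : ℝ), μ {x | ENNReal.ofReal t < f x} ^ p⁻¹) * J ^ q⁻¹ :=
    calc J = ∫⁻ x, f x ∂μ.withDensity fun x => f x ^ (p - 1) := by
          rw [hJ, hpow, lintegral_withDensity_eq_lintegral_mul _ (by fun_prop) hf]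
          rfl
      _ = ∫⁻ t in Ioi (0 : ℝ),
            μ.withDensity (fun x => f x ^ (p - 1)) {x | ENNReal.ofReal t < f x} :=
          lintegral_eq_lintegral_meas_ofReal_lt _ hf
      _ ≤ ∫⁻ t in Ioi (0 : ℝ), μ {x | ENNReal.ofReal t < f x} ^ p⁻¹ * J ^ q⁻¹ :=
          lintegral_mono fun t => hholder t
      _ = (∫⁻ t in Ioi (0 : ℝ), μ {x | ENNReal.ofReal t < f x} ^ p⁻¹) * J ^ q⁻¹ :=
          lintegral_mul_const _ ((measurable_meas_ofReal_lt μ f).pow_const _)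
  have hJq : J ^ q⁻¹ ≠ 0 ∧ J ^ q⁻¹ ≠ ∞ := by simp [hJ0, hfp]
  rw [← ENNReal.mul_le_mul_iff_left hJq.1 hJq.2, ← ENNReal.rpow_add _ _ hJ0 hfp,
    hpq.inv_add_inv_eq_one, ENNReal.rpow_one]
  exact hJle

section Sobolev

variable {E : Type*} [NormedAddCommGroup E] [NormedSpace ℝ E]

theorem exists_forall_dist_lt_enorm_le {F : Type*} [NormedAddCommGroup F] [NormedSpace ℝ F]
    {w : E → F} (hw : ContDiff ℝ 1 w) (hc : HasCompactSupport w) {η : ℝ≥0} (hη : 0 < η) :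
    ∃ ε : ℝ, 0 < ε ∧ ∀ x y, dist y x < ε → ‖w y‖ₑ ≤ ‖w x‖ₑ + ENNReal.ofReal ε *
      (‖fderiv ℝ w x‖ₑ + (cthickening 1 (tsupport w)).indicator (fun _ => (η : ℝ≥0∞)) x) := by
  have huc : UniformContinuous (fderiv ℝ w) :=
    (hc.fderiv (𝕜 := ℝ)).uniformContinuous_of_continuous (hw.continuous_fderiv one_ne_zero)
  obtain ⟨δ, hδ, hDw⟩ := Metric.uniformContinuous_iff.1 huc η hη
  refine ⟨min δ 1, lt_min hδ one_pos, fun x y hxy => ?_⟩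
  by_cases hx : x ∈ cthickening 1 (tsupport w)
  · have hderiv : ∀ z ∈ ball x (min δ 1), ‖fderiv ℝ w z‖ ≤ ‖fderiv ℝ w x‖ + η := fun z hz =>
      norm_le_norm_add_const_of_dist_le (hDw (hz.trans_le (min_le_left _ _))).le
    have hmv : ‖w y - w x‖ ≤ (‖fderiv ℝ w x‖ + η) * ‖y - x‖ :=
      (convex_ball x _).norm_image_sub_le_of_norm_fderiv_le
        (fun z _ => hw.differentiable one_ne_zero z) hderiv
        (mem_ball_self (lt_min hδ one_pos)) hxy
    rw [indicator_of_mem hx, ← ofReal_norm (w x), ← ofReal_norm (w y), ← ofReal_norm,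
      ← ENNReal.ofReal_coe_nnreal, ← ENNReal.ofReal_add (by positivity) (by positivity),
      ← ENNReal.ofReal_mul (by positivity), ← ENNReal.ofReal_add (norm_nonneg _) (by positivity)]
    refine ENNReal.ofReal_le_ofReal ?_
    calc ‖w y‖ ≤ ‖w x‖ + ‖w y - w x‖ := norm_le_norm_add_norm_sub' _ _
      _ ≤ ‖w x‖ + min δ 1 * (‖fderiv ℝ w x‖ + η) := by
        rw [mul_comm]
        gcongr
        refine hmv.trans ?_
        gcongr
        exact (dist_eq_norm y x ▸ hxy).le
  · have hy : w y = 0 := image_eq_zero_of_notMem_tsupport fun hy => hx <|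
      mem_cthickening_of_dist_le x y 1 _ hy (dist_comm x y ▸ (hxy.trans_le (min_le_right _ _)).le)
    simp [hy]

variable [MeasurableSpace E] [BorelSpace E] [FiniteDimensional ℝ E]
  (μ : Measure E) [μ.IsAddHaarMeasure] {p : ℝ} (hp : (finrank ℝ E : ℝ).HolderConjugate p)
include hp

theorem lintegral_add_isoperimetricConst_mul_le {f g : E → ℝ≥0∞} (hf : LowerSemicontinuous f)
    (hg : Measurable g) {ε : ℝ} (hε : 0 < ε) (H : ∀ x y, dist y x < ε → f y ≤ f x + g x) :
    ∫⁻ x, f x ∂μ + ENNReal.ofReal ε *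
        (isoperimetricConst μ * ∫⁻ t in Ioi (0 : ℝ), μ {x | ENNReal.ofReal t < f x} ^ p⁻¹)
      ≤ ∫⁻ x, (f + g) x ∂μ := by
  have hmeas := measurable_meas_ofReal_lt μ f
  rw [lintegral_eq_lintegral_meas_ofReal_lt μ hf.measurable,
    lintegral_eq_lintegral_meas_ofReal_lt μ (hf.measurable.add hg),
    ← lintegral_const_mul _ (hmeas.pow_const _),
    ← lintegral_const_mul _ ((hmeas.pow_const _).const_mul _), ← lintegral_add_left hmeas]
  refine lintegral_mono fun t => ?_
  calc μ {x | ENNReal.ofReal t < f x} + ENNReal.ofReal ε *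
        (isoperimetricConst μ * μ {x | ENNReal.ofReal t < f x} ^ p⁻¹)
      ≤ μ ({x | ENNReal.ofReal t < f x} + ball 0 ε) :=
        measure_add_isoperimetricConst_mul_le μ hp (hf.isOpen_preimage _) hε
    _ ≤ μ {x | ENNReal.ofReal t < (f + g) x} := measure_mono <| by
        rintro _ ⟨y, hy, z, hz, rfl⟩
        exact lt_of_lt_of_le hy (H (y + z) y (by simpa using hz))

theorem isoperimetricConst_mul_lintegral_meas_le_lintegral_enorm_fderiv {F : Type*}
    [NormedAddCommGroup F] [NormedSpace ℝ F] {w : E → F} (hw : ContDiff ℝ 1 w)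
    (hc : HasCompactSupport w) :
    isoperimetricConst μ * ∫⁻ t in Ioi (0 : ℝ), μ {x | ENNReal.ofReal t < ‖w x‖ₑ} ^ p⁻¹
      ≤ ∫⁻ x, ‖fderiv ℝ w x‖ₑ ∂μ := by
  have hDw : Continuous (fderiv ℝ w) := hw.continuous_fderiv one_ne_zero
  set K := cthickening 1 (tsupport w)
  have hKc : IsCompact K := hc.isCompact.cthickening
  have hle : ∀ η : ℝ≥0, 0 < η →
      isoperimetricConst μ * ∫⁻ t in Ioi (0 : ℝ), μ {x | ENNReal.ofReal t < ‖w x‖ₑ} ^ p⁻¹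
        ≤ ∫⁻ x, ‖fderiv ℝ w x‖ₑ ∂μ + η * μ K := by
    intro η hη
    obtain ⟨ε, hε, H⟩ := exists_forall_dist_lt_enorm_le hw hc hη
    have hind : Measurable (K.indicator fun _ => (η : ℝ≥0∞)) :=
      measurable_const.indicator hKc.measurableSet
    have hD : Measurable fun x => ‖fderiv ℝ w x‖ₑ + K.indicator (fun _ => (η : ℝ≥0∞)) x :=
      hDw.enorm.measurable.add hind
    have hwi : ∫⁻ x, ‖w x‖ₑ ∂μ ≠ ∞ :=
      (hw.continuous.integrable_of_hasCompactSupport hc).hasFiniteIntegral.ne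
    have h := lintegral_add_isoperimetricConst_mul_le μ hp
      hw.continuous.enorm.lowerSemicontinuous
      (hD.const_mul (ENNReal.ofReal ε)) hε H
    simp only [Pi.add_apply] at h
    rw [lintegral_add_left hw.continuous.enorm.measurable,
      lintegral_const_mul _ hD,
      ENNReal.add_le_add_iff_left hwi, ENNReal.mul_le_mul_iff_right (by simpa) (by simp)] at h
    simpa [lintegral_add_left hDw.enorm.measurable, lintegral_indicator_const hKc.measurableSet]
      using h
  have hlim : Tendsto (fun η : ℝ≥0 => ∫⁻ x, ‖fderiv ℝ w x‖ₑ ∂μ + η * μ K) (𝓝[>] 0)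
      (𝓝 (∫⁻ x, ‖fderiv ℝ w x‖ₑ ∂μ)) := by
    have h0 : Tendsto (fun η : ℝ≥0 => (η : ℝ≥0∞)) (𝓝[>] 0) (𝓝 0) :=
      (ENNReal.tendsto_coe.2 tendsto_id).mono_left nhdsWithin_le_nhds
    simpa using (ENNReal.Tendsto.mul_const h0 (.inr hKc.measure_ne_top)).const_add _
  exact ge_of_tendsto hlim (eventually_mem_nhdsWithin.mono hle)

theorem isoperimetricConst_mul_eLpNorm_le_lintegral_enorm_fderiv {F : Type*}
    [NormedAddCommGroup F] [NormedSpace ℝ F] {w : E → F} (hw : ContDiff ℝ 1 w)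
    (hc : HasCompactSupport w) :
    isoperimetricConst μ * eLpNorm w (ENNReal.ofReal p) μ ≤ ∫⁻ x, ‖fderiv ℝ w x‖ₑ ∂μ := by
  have hmem : MemLp w (ENNReal.ofReal p) μ := hw.continuous.memLp_of_hasCompactSupport hc
  have heLp := eLpNorm_eq_lintegral_rpow_enorm_toReal (f := w) (μ := μ)
    (ENNReal.ofReal_pos.2 hp.symm.pos).ne' ENNReal.ofReal_ne_top
  rw [ENNReal.toReal_ofReal hp.symm.nonneg, one_div] at heLp
  have hfin : ∫⁻ x, ‖w x‖ₑ ^ p ∂μ ≠ ∞ := fun h =>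
    hmem.eLpNorm_ne_top (by simp [heLp, h, hp.symm.inv_pos])
  refine le_trans ?_ (isoperimetricConst_mul_lintegral_meas_le_lintegral_enorm_fderiv μ hp hw hc)
  rw [heLp]
  gcongr
  exact lintegral_rpow_le_lintegral_meas_ofReal_lt_rpow μ hp.symm
    hw.continuous.enorm.measurable hfin

end Sobolev

/-! ### Divergence and integration by parts -/

section Divergence

variable {N : ℕ} {ψ : Euc N → Euc N}

/-- The divergence of a vector field on `ℝ^N`, in the coordinate form that occurs in `TVSet`. -/
def divergence (ψ : Euc N → Euc N) (x : Euc N) : ℝ :=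
  ∑ i, fderiv ℝ (fun y => ψ y i) x (EuclideanSpace.single i 1)

theorem continuous_divergence (hψ : ContDiff ℝ 1 ψ) : Continuous (divergence ψ) :=
  continuous_finsetSum _ fun i _ =>
    ((contDiff_euclidean.1 hψ i).continuous_fderiv one_ne_zero).clm_apply continuous_const

theorem hasCompactSupport_apply (hψ : HasCompactSupport ψ) (i : Fin N) :
    HasCompactSupport fun x => ψ x i :=
  hψ.comp_left (g := fun v : Euc N => v i) rfl

theorem hasCompactSupport_divergence (hψ : HasCompactSupport ψ) :
    HasCompactSupport (divergence ψ) := by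
  refine HasCompactSupport.intro hψ.isCompact fun x hx => Finset.sum_eq_zero fun i _ => ?_
  have hxi : x ∉ tsupport fun y => ψ y i := fun h =>
    hx (tsupport_comp_subset (g := fun v : Euc N => v i) rfl ψ h)
  rw [fderiv_of_notMem_tsupport ℝ hxi, zero_apply]

theorem sum_apply_single_mul (L : Euc N →L[ℝ] ℝ) (v : Euc N) :
    ∑ i, L (EuclideanSpace.single i 1) * v i = L v := by
  conv_rhs => rw [← (EuclideanSpace.basisFun (Fin N) ℝ).sum_repr v]
  simp [mul_comm]

theorem divergence_smul {χ : Euc N → ℝ} {x : Euc N} (hχ : DifferentiableAt ℝ χ x)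
    (hψ : DifferentiableAt ℝ ψ x) :
    divergence (fun y => χ y • ψ y) x = χ x * divergence ψ x + fderiv ℝ χ x (ψ x) := by
  simp only [divergence, PiLp.smul_apply, smul_eq_mul, Finset.mul_sum,
    ← sum_apply_single_mul (fderiv ℝ χ x) (ψ x), ← Finset.sum_add_distrib]
  refine Finset.sum_congr rfl fun i _ => ?_
  simp [fderiv_fun_mul hχ (differentiableAt_euclidean.1 hψ i), mul_comm]

theorem divergence_comp_add_right (ψ : Euc N → Euc N) (t x : Euc N) :
    divergence (fun y => ψ (y + t)) x = divergence ψ (x + t) :=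
  Finset.sum_congr rfl fun i _ => by rw [fderiv_comp_add_right (f := fun y => ψ y i) t]

theorem integrable_mul_fderiv_apply {E : Type*} [NormedAddCommGroup E] [NormedSpace ℝ E]
    [MeasurableSpace E] [BorelSpace E] {μ : Measure E} [IsFiniteMeasureOnCompacts μ]
    {φ g : E → ℝ} (hφ : Continuous φ) (hg : ContDiff ℝ 1 g) (hgc : HasCompactSupport g) (v : E) :
    Integrable (fun x => φ x * fderiv ℝ g x v) μ :=
  (hφ.mul ((hg.continuous_fderiv one_ne_zero).clm_apply
    continuous_const)).integrable_of_hasCompactSupport (hgc.fderiv_apply (𝕜 := ℝ) v).mul_left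

section LineDeriv

variable {E : Type*} [NormedAddCommGroup E] [NormedSpace ℝ E] [MeasurableSpace E]
  [BorelSpace E] {μ : Measure E} {C : ℝ≥0} {φ g : E → ℝ}

theorem integrable_lineDeriv_mul [IsFiniteMeasureOnCompacts μ] (hφ : LipschitzWith C φ)
    (hg : Continuous g) (hgc : HasCompactSupport g) (v : E) :
    Integrable (fun x => lineDeriv ℝ φ x v * g x) μ :=
  (hg.integrable_of_hasCompactSupport hgc).bdd_mul (c := C * ‖v‖)
    (measurable_lineDeriv hφ.continuous).aestronglyMeasurable
    (.of_forall fun _ => norm_lineDeriv_le_of_lipschitz ℝ hφ)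

theorem integral_mul_fderiv_apply_eq_neg [FiniteDimensional ℝ E] [μ.IsAddHaarMeasure]
    (hφ : LipschitzWith C φ) (hg : ContDiff ℝ 1 g) (hgc : HasCompactSupport g)
    (v : E) : ∫ x, φ x * fderiv ℝ g x v ∂μ = -∫ x, lineDeriv ℝ φ x v * g x ∂μ := by
  obtain ⟨D, hD⟩ := hg.lipschitzWith_of_hasCompactSupport hgc one_ne_zero
  rw [hφ.integral_lineDeriv_mul_eq hD hgc, ← integral_neg]
  refine integral_congr_ae (.of_forall fun x => ?_)
  simp [(hg.differentiable one_ne_zero x).lineDeriv_eq_fderiv, mul_comm]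

end LineDeriv

theorem integral_mul_divergence_eq_neg {C : ℝ≥0} {φ : Euc N → ℝ} (hφ : LipschitzWith C φ)
    (hψ : ContDiff ℝ 1 ψ) (hψc : HasCompactSupport ψ) :
    ∫ x, φ x * divergence ψ x = -∫ x, fderiv ℝ φ x (ψ x) := by
  have hψi := contDiff_euclidean.1 hψ
  have hψci := hasCompactSupport_apply hψc
  calc ∫ x, φ x * divergence ψ x
      = ∑ i, ∫ x, φ x * fderiv ℝ (fun y => ψ y i) x (EuclideanSpace.single i 1) := by
        simp only [divergence, Finset.mul_sum]
        exact integral_finsetSum _ fun i _ =>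
          integrable_mul_fderiv_apply hφ.continuous (hψi i) (hψci i) _
    _ = -∫ x, ∑ i, lineDeriv ℝ φ x (EuclideanSpace.single i 1) * ψ x i := by
        rw [integral_finsetSum _ fun i _ =>
          integrable_lineDeriv_mul hφ (hψi i).continuous (hψci i) _, ← Finset.sum_neg_distrib]
        exact Finset.sum_congr rfl fun i _ =>
          integral_mul_fderiv_apply_eq_neg hφ (hψi i) (hψci i) _
    _ = -∫ x, fderiv ℝ φ x (ψ x) := by
        congr 1
        refine integral_congr_ae ?_
        filter_upwards [hφ.ae_differentiableAt] with x hx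
        simp only [hx.lineDeriv_eq_fderiv, sum_apply_single_mul]

end Divergence

/-! ### Total variation -/

section TotalVariation

variable {N : ℕ} {u : Euc N → ℝ} {T : ℝ}

theorem mem_upperBounds_TVSet : T ∈ upperBounds (TVSet N u) ↔
    ∀ ψ : Euc N → Euc N, ContDiff ℝ 1 ψ → HasCompactSupport ψ → (∀ x, ‖ψ x‖ ≤ 1) →
      ∫ x, u x * divergence ψ x ≤ T :=
  ⟨fun h ψ hψ hψc hψ1 => h ⟨ψ, hψ, hψc, hψ1, rfl⟩,
    fun h _ ⟨ψ, hψ, hψc, hψ1, hr⟩ => hr ▸ h ψ hψ hψc hψ1⟩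

theorem zero_mem_TVSet (u : Euc N → ℝ) : 0 ∈ TVSet N u :=
  ⟨0, contDiff_const, HasCompactSupport.zero, by simp, by simp⟩

theorem tv_nonneg (u : Euc N → ℝ) : 0 ≤ tv N u :=
  Real.sSup_nonneg' ⟨0, zero_mem_TVSet u, le_rfl⟩

theorem MemBV.tv_mem_upperBounds (hu : MemBV N u) : tv N u ∈ upperBounds (TVSet N u) :=
  fun _ => le_csSup hu.2

theorem tv_le_of_mem_upperBounds (hT : T ∈ upperBounds (TVSet N u)) : tv N u ≤ T :=
  csSup_le ⟨0, zero_mem_TVSet u⟩ hT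

-- The field `-(δ ^ 2 + ‖G‖ ^ 2) ^ (-1 / 2) G` is a smooth substitute for `-G / ‖G‖`.
theorem exists_contDiff_forall_norm_sub_le_inner {E F : Type*} [NormedAddCommGroup E]
    [NormedSpace ℝ E] [NormedAddCommGroup F] [InnerProductSpace ℝ F] {n : WithTop ℕ∞} {G : E → F}
    (hG : ContDiff ℝ n G) (hGc : HasCompactSupport G) {δ : ℝ} (hδ : 0 < δ) :
    ∃ ψ : E → F, ContDiff ℝ n ψ ∧ HasCompactSupport ψ ∧ (∀ x, ‖ψ x‖ ≤ 1) ∧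
      ∀ x, ‖G x‖ - δ ≤ -inner ℝ (G x) (ψ x) := by
  set s : E → ℝ := fun x => √(δ ^ 2 + ‖G x‖ ^ 2)
  have hpos : ∀ x, 0 < δ ^ 2 + ‖G x‖ ^ 2 := fun x => by positivity
  have hs0 : ∀ x, 0 < s x := fun x => Real.sqrt_pos.2 (hpos x)
  have hGs : ∀ x, ‖G x‖ ≤ s x := fun x => Real.le_sqrt_of_sq_le (by nlinarith)
  have hδs : ∀ x, δ ≤ s x := fun x => Real.le_sqrt_of_sq_le (by nlinarith [sq_nonneg ‖G x‖])
  have hsd : ContDiff ℝ n s :=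
    (contDiff_const.add (hG.norm_sq ℝ)).sqrt fun x => (hpos x).ne'
  refine ⟨fun x => -(s x)⁻¹ • G x, (hsd.inv fun x => (hs0 x).ne').neg.smul hG, hGc.smul_left,
    fun x => ?_, fun x => ?_⟩
  · rw [norm_smul, norm_neg, norm_inv, Real.norm_of_nonneg (hs0 x).le, inv_mul_le_one₀ (hs0 x)]
    exact hGs x
  · have hsq : s x ^ 2 = δ ^ 2 + ‖G x‖ ^ 2 := Real.sq_sqrt (hpos x).le
    rw [inner_smul_right, real_inner_self_eq_norm_sq, neg_mul, neg_neg, inv_mul_eq_div,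
      le_div_iff₀ (hs0 x)]
    nlinarith [hGs x, hδs x, hs0 x]

theorem contDiff_gradient {n : WithTop ℕ∞} (hu : ContDiff ℝ (n + 1) u) :
    ContDiff ℝ n (gradient u) := by
  refine contDiff_euclidean.2 fun i => ?_
  have hi : (fun x => gradient u x i) = fun x => fderiv ℝ u x (EuclideanSpace.single i 1) := by
    ext x
    rw [← inner_gradient_left, EuclideanSpace.inner_single_right]
    simp
  rw [hi]
  exact (hu.fderiv_right le_rfl).clm_apply contDiff_const

theorem integral_norm_fderiv_le {w : Euc N → ℝ} (hw : ContDiff ℝ 2 w) (hwc : HasCompactSupport w)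
    (hT : T ∈ upperBounds (TVSet N w)) : ∫ x, ‖fderiv ℝ w x‖ ≤ T := by
  have hGd : ContDiff ℝ 1 (gradient w) := contDiff_gradient (hw.of_le (by norm_num))
  have hGc : HasCompactSupport (gradient w) := (hwc.fderiv (𝕜 := ℝ)).comp_left (map_zero _)
  have hG : ∀ x, ‖gradient w x‖ = ‖fderiv ℝ w x‖ := fun x => LinearIsometryEquiv.norm_map _ _
  obtain ⟨C, hC⟩ := (hw.of_le one_le_two).lipschitzWith_of_hasCompactSupport hwc one_ne_zero
  set K := tsupport (gradient w)
  have hK : volume K ≠ ∞ := hGc.measure_lt_top.ne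
  have hGi : Integrable (gradient w) := hGd.continuous.integrable_of_hasCompactSupport hGc
  have hle : ∀ δ > 0, ∫ x, ‖fderiv ℝ w x‖ ≤ T + volume.real K * δ := by
    intro δ hδ
    obtain ⟨ψ, hψ, hψc, hψ1, hψG⟩ := exists_contDiff_forall_norm_sub_le_inner hGd hGc hδ
    have hψi : Integrable fun x => -inner ℝ (gradient w x) (ψ x) :=
      ((hGd.continuous.inner hψ.continuous).integrable_of_hasCompactSupport
        (hGc.mono fun x hx h => hx (by simp [h]))).neg
    have hTψ : ∫ x, -inner ℝ (gradient w x) (ψ x) ≤ T := by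
      simpa [integral_mul_divergence_eq_neg hC hψ hψc, integral_neg] using
        mem_upperBounds_TVSet.1 hT ψ hψ hψc hψ1
    calc ∫ x, ‖fderiv ℝ w x‖ = ∫ x in K, ‖gradient w x‖ := by
          rw [setIntegral_eq_integral_of_forall_compl_eq_zero fun x hx => ?_]
          · simp only [hG]
          · rw [image_eq_zero_of_notMem_tsupport hx, norm_zero]
      _ ≤ ∫ x in K, (-inner ℝ (gradient w x) (ψ x) + δ) :=
          setIntegral_mono hGi.norm.integrableOn (hψi.integrableOn.add (integrableOn_const hK))
            fun x => sub_le_iff_le_add.1 (hψG x)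
      _ = (∫ x, -inner ℝ (gradient w x) (ψ x)) + volume.real K * δ := by
          rw [integral_add hψi.integrableOn (integrableOn_const hK),
            setIntegral_const, smul_eq_mul,
            setIntegral_eq_integral_of_forall_compl_eq_zero fun x hx => ?_]
          rw [image_eq_zero_of_notMem_tsupport hx, inner_zero_left, neg_zero]
      _ ≤ T + volume.real K * δ := by linarith
  have hlim : Tendsto (fun δ => T + volume.real K * δ) (𝓝[>] 0) (𝓝 T) :=
    tendsto_nhdsWithin_of_tendsto_nhds (Continuous.tendsto' (by fun_prop) _ _ (by simp))
  exact ge_of_tendsto hlim (eventually_mem_nhdsWithin.mono hle)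

theorem lintegral_enorm_fderiv_le {w : Euc N → ℝ} (hw : ContDiff ℝ 2 w)
    (hwc : HasCompactSupport w) (hT : T ∈ upperBounds (TVSet N w)) :
    ∫⁻ x, ‖fderiv ℝ w x‖ₑ ≤ ENNReal.ofReal T := by
  have hi : Integrable (fderiv ℝ w) :=
    (hw.continuous_fderiv two_ne_zero).integrable_of_hasCompactSupport (hwc.fderiv (𝕜 := ℝ))
  rw [← ofReal_integral_norm_eq_lintegral_enorm hi]
  exact ENNReal.ofReal_le_ofReal (integral_norm_fderiv_le hw hwc hT)

theorem add_mul_integral_mem_upperBounds_TVSet_mul (hu : Integrable u)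
    (hT : T ∈ upperBounds (TVSet N u)) {χ : Euc N → ℝ} (hχ : ContDiff ℝ 1 χ) (hχ1 : ∀ x, ‖χ x‖ ≤ 1)
    {c : ℝ} (hc : ∀ x, ‖fderiv ℝ χ x‖ ≤ c) :
    T + c * ∫ x, ‖u x‖ ∈ upperBounds (TVSet N fun x => χ x * u x) := by
  refine mem_upperBounds_TVSet.2 fun ψ hψ hψc hψ1 => ?_
  have hdiv : Integrable fun x => χ x * u x * divergence ψ x := by
    obtain ⟨M, hM⟩ := (hasCompactSupport_divergence hψc).exists_bound_of_continuous
      (continuous_divergence hψ)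
    exact (hu.bdd_mul hχ.continuous.aestronglyMeasurable (.of_forall hχ1)).mul_bdd
      (continuous_divergence hψ).aestronglyMeasurable (.of_forall hM)
  have hχψ : ∀ x, ‖fderiv ℝ χ x (ψ x)‖ ≤ c := fun x =>
    ((fderiv ℝ χ x).le_of_opNorm_le_of_le (hc x) (hψ1 x)).trans_eq (mul_one c)
  have hfderiv : Integrable fun x => u x * fderiv ℝ χ x (ψ x) :=
    hu.mul_bdd ((hχ.continuous_fderiv one_ne_zero).clm_apply
      hψ.continuous).aestronglyMeasurable (.of_forall hχψ)
  have hsum : (∫ x, χ x * u x * divergence ψ x) + ∫ x, u x * fderiv ℝ χ x (ψ x) ≤ T := by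
    have hχψ1 : ∀ x, ‖χ x • ψ x‖ ≤ 1 := fun x =>
      (norm_smul _ _).trans_le (mul_le_one₀ (hχ1 x) (norm_nonneg _) (hψ1 x))
    have hle := mem_upperBounds_TVSet.1 hT (fun x => χ x • ψ x) (hχ.smul hψ)
      (hψc.smul_left (f := χ)) hχψ1
    rw [← integral_add hdiv hfderiv]
    refine (integral_congr_ae (.of_forall fun x => ?_)).trans_le hle
    simp only [divergence_smul (hχ.differentiable one_ne_zero x)
      (hψ.differentiable one_ne_zero x)]
    ring
  have hbound : ‖∫ x, u x * fderiv ℝ χ x (ψ x)‖ ≤ c * ∫ x, ‖u x‖ := by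
    rw [← integral_const_mul]
    refine norm_integral_le_of_norm_le (hu.norm.const_mul c) (.of_forall fun x => ?_)
    rw [norm_mul, mul_comm]
    exact mul_le_mul_of_nonneg_right (hχψ x) (norm_nonneg _)
  linarith [neg_le_of_abs_le hbound]

open scoped Convolution in
theorem mem_upperBounds_TVSet_convolution (hu : Integrable u) (hT : T ∈ upperBounds (TVSet N u))
    {ρ : Euc N → ℝ} (hρ : Integrable ρ) (hρ0 : ∀ x, 0 ≤ ρ x) (hρ1 : ∫ x, ρ x = 1) :
    T ∈ upperBounds (TVSet N (ρ ⋆ u)) := by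
  refine mem_upperBounds_TVSet.2 fun ψ hψ hψc hψ1 => ?_
  obtain ⟨M, hM⟩ := (hasCompactSupport_divergence hψc).exists_bound_of_continuous
    (continuous_divergence hψ)
  have hint : Integrable (fun p : Euc N × Euc N => ρ p.2 * u (p.1 - p.2) * divergence ψ p.1)
      (volume.prod volume) :=
    (hρ.convolution_integrand (.lsmul ℝ ℝ) hu).mul_bdd
      ((continuous_divergence hψ).comp continuous_fst).aestronglyMeasurable
      (.of_forall fun p => hM p.1)
  have htranslate : ∀ t, ∫ x, u (x - t) * divergence ψ x ≤ T := fun t => by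
    rw [← integral_add_right_eq_self _ t]
    simp only [add_sub_cancel_right, ← divergence_comp_add_right]
    exact mem_upperBounds_TVSet.1 hT _ (hψ.comp (contDiff_id.add contDiff_const))
      (hψc.comp_homeomorph (Homeomorph.addRight t)) fun x => hψ1 _
  calc ∫ x, (ρ ⋆ u) x * divergence ψ x
      = ∫ x, ∫ t, ρ t * u (x - t) * divergence ψ x := by
        simp only [convolution_def, ContinuousLinearMap.lsmul_apply, smul_eq_mul,
          integral_mul_const]
    _ = ∫ t, ∫ x, ρ t * u (x - t) * divergence ψ x := integral_integral_swap hint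
    _ ≤ ∫ t, ρ t * T := by
        refine integral_mono hint.integral_prod_right (hρ.mul_const T) fun t => ?_
        simp only [mul_assoc, integral_const_mul]
        exact mul_le_mul_of_nonneg_left (htranslate t) (hρ0 t)
    _ = T := by rw [integral_mul_const, hρ1, one_mul]

theorem exists_contDiff_seq_tendsto_ae (hu : Integrable u) (huc : HasCompactSupport u)
    (hT : T ∈ upperBounds (TVSet N u)) :
    ∃ w : ℕ → Euc N → ℝ, (∀ k, ContDiff ℝ 2 (w k)) ∧ (∀ k, HasCompactSupport (w k)) ∧
      (∀ k, T ∈ upperBounds (TVSet N (w k))) ∧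
      ∀ᵐ x, Tendsto (fun k => w k x) atTop (𝓝 (u x)) := by
  have hpos : ∀ k : ℕ, 0 < 1 / ((k : ℝ) + 1) := fun k => by positivity
  let φ : ℕ → ContDiffBump (0 : Euc N) := fun k =>
    ⟨1 / ((k : ℝ) + 1), 2 * (1 / ((k : ℝ) + 1)), hpos k, by linarith [hpos k]⟩
  have hφ : Tendsto (fun k => (φ k).rOut) atTop (𝓝 0) := by
    simpa [φ] using (tendsto_one_div_add_atTop_nhds_zero_nat (𝕜 := ℝ)).const_mul 2
  exact ⟨fun k => convolution ((φ k).normed volume) u (.lsmul ℝ ℝ) volume,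
    fun k => (φ k).hasCompactSupport_normed.contDiff_convolution_left _ (φ k).contDiff_normed
      hu.locallyIntegrable,
    fun k => (φ k).hasCompactSupport_normed.convolution _ huc,
    fun k => mem_upperBounds_TVSet_convolution hu hT (φ k).integrable_normed (φ k).nonneg_normed
      (φ k).integral_normed,
    ContDiffBump.ae_convolution_tendsto_right_of_locallyIntegrable hφ
      (.of_forall fun _ => le_rfl) hu.locallyIntegrable⟩

end TotalVariation

/-! ### The sharp Sobolev inequality for functions of bounded variation -/

theorem exists_contDiff_cutoff_seq (E : Type*) [NormedAddCommGroup E] [NormedSpace ℝ E]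
    [FiniteDimensional ℝ E] :
    ∃ (χ : ℕ → E → ℝ) (c : ℕ → ℝ), (∀ k, ContDiff ℝ 1 (χ k)) ∧ (∀ k, HasCompactSupport (χ k)) ∧
      (∀ k x, ‖χ k x‖ ≤ 1) ∧ (∀ k x, ‖fderiv ℝ (χ k) x‖ ≤ c k) ∧ Tendsto c atTop (𝓝 0) ∧
      ∀ x, Tendsto (fun k => χ k x) atTop (𝓝 1) := by
  let χ : ContDiffBump (0 : E) := ⟨1, 2, one_pos, one_lt_two⟩
  obtain ⟨M, hM⟩ := (χ.hasCompactSupport.fderiv (𝕜 := ℝ)).exists_bound_of_continuous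
    ((χ.contDiff (n := 1)).continuous_fderiv one_ne_zero)
  have hpos : ∀ k : ℕ, 0 < 1 / ((k : ℝ) + 1) := fun k => by positivity
  have hlim := tendsto_one_div_add_atTop_nhds_zero_nat (𝕜 := ℝ)
  refine ⟨fun k x => χ ((1 / ((k : ℝ) + 1)) • x), fun k => 1 / ((k : ℝ) + 1) * M,
    fun k => χ.contDiff.comp (contDiff_const_smul _),
    fun k => χ.hasCompactSupport.comp_smul (hpos k).ne', fun k x => ?_, fun k x => ?_,
    by simpa using hlim.mul_const M, fun x => ?_⟩
  · rw [Real.norm_of_nonneg χ.nonneg]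
    exact χ.le_one
  · rw [fderiv_comp_smul, norm_smul, Real.norm_of_nonneg (hpos k).le]
    exact mul_le_mul_of_nonneg_left (hM _) (hpos k).le
  · have hχ0 : χ ((0 : ℝ) • x) = 1 := χ.one_of_mem_closedBall (by simp [χ])
    simpa only [hχ0, Function.comp_def] using
      (χ.continuous.tendsto _).comp (hlim.smul_const x)

theorem mul_eLpNorm_le_of_tendsto_ae {α F : Type*} [MeasurableSpace α] {μ : Measure α}
    [NormedAddCommGroup F] {p c b : ℝ≥0∞} (hc : c ≠ ∞) {f : ℕ → α → F} {g : α → F} {B : ℕ → ℝ≥0∞}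
    (hf : ∀ k, AEStronglyMeasurable (f k) μ) (hfB : ∀ k, c * eLpNorm (f k) p μ ≤ B k)
    (hB : Tendsto B atTop (𝓝 b)) (hfg : ∀ᵐ x ∂μ, Tendsto (fun k => f k x) atTop (𝓝 (g x))) :
    c * eLpNorm g p μ ≤ b := by
  calc c * eLpNorm g p μ
      ≤ c * liminf (fun k => eLpNorm (f k) p μ) atTop := by
        gcongr
        exact Lp.eLpNorm_lim_le_liminf_eLpNorm hf g hfg
    _ = liminf (fun k => c * eLpNorm (f k) p μ) atTop :=
        (ENNReal.liminf_const_mul_of_ne_top hc).symm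
    _ ≤ liminf B atTop := liminf_le_liminf (.of_forall hfB)
    _ = b := hB.liminf_eq

theorem isoperimetricConst_ne_top {E : Type*} [NormedAddCommGroup E] [NormedSpace ℝ E]
    [FiniteDimensional ℝ E] [MeasurableSpace E] (μ : Measure E) [IsFiniteMeasureOnCompacts μ] :
    isoperimetricConst μ ≠ ∞ :=
  ENNReal.mul_ne_top (ENNReal.natCast_ne_top _)
    (ENNReal.rpow_ne_top_of_nonneg (by positivity) measure_ball_lt_top.ne)

section Sobolev

variable {N : ℕ} {u : Euc N → ℝ} {p : ℝ}

theorem isoperimetricConst_mul_eLpNorm_le_ofReal_of_hasCompactSupport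
    (hp : (N : ℝ).HolderConjugate p) (hu : Integrable u) (huc : HasCompactSupport u) {T : ℝ}
    (hT : T ∈ upperBounds (TVSet N u)) :
    isoperimetricConst (volume : Measure (Euc N)) * eLpNorm u (ENNReal.ofReal p) volume ≤
      ENNReal.ofReal T := by
  obtain ⟨w, hw, hwc, hwT, hwu⟩ := exists_contDiff_seq_tendsto_ae hu huc hT
  have hp' : (finrank ℝ (Euc N) : ℝ).HolderConjugate p := by rwa [finrank_euclideanSpace_fin]
  exact mul_eLpNorm_le_of_tendsto_ae (isoperimetricConst_ne_top _)
    (fun k => (hw k).continuous.aestronglyMeasurable)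
    (fun k => (isoperimetricConst_mul_eLpNorm_le_lintegral_enorm_fderiv volume hp'
      ((hw k).of_le one_le_two) (hwc k)).trans (lintegral_enorm_fderiv_le (hw k) (hwc k) (hwT k)))
    tendsto_const_nhds hwu

theorem isoperimetricConst_mul_eLpNorm_le_ofReal_tv (hp : (N : ℝ).HolderConjugate p)
    (hu : MemBV N u) :
    isoperimetricConst (volume : Measure (Euc N)) * eLpNorm u (ENNReal.ofReal p) volume ≤
      ENNReal.ofReal (tv N u) := by
  obtain ⟨χ, c, hχ, hχc, hχ1, hχc', hc, hχlim⟩ := exists_contDiff_cutoff_seq (Euc N)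
  have hχu : ∀ k, Integrable fun x => χ k x * u x := fun k =>
    hu.1.bdd_mul (hχ k).continuous.aestronglyMeasurable (.of_forall (hχ1 k))
  refine mul_eLpNorm_le_of_tendsto_ae (isoperimetricConst_ne_top _) (fun k => (hχu k).1)
    (fun k => isoperimetricConst_mul_eLpNorm_le_ofReal_of_hasCompactSupport hp (hχu k)
      (hχc k).mul_right (add_mul_integral_mem_upperBounds_TVSet_mul hu.1
        hu.tv_mem_upperBounds (hχ k) (hχ1 k) (hχc' k)))
    (ENNReal.tendsto_ofReal ?_) (.of_forall fun x => ?_)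
  · simpa using (hc.mul_const (∫ x, ‖u x‖)).const_add (tv N u)
  · simpa using (hχlim x).mul_const (u x)

end Sobolev

/-! ### Total variation of multiples of balls -/

section Minkowski

theorem fderiv_thickenedIndicator_of_notMem {E : Type*} [NormedAddCommGroup E] [NormedSpace ℝ E]
    {δ : ℝ} (hδ : 0 < δ) {K : Set E} {x : E} (hx : x ∉ thickening δ K \ K) :
    fderiv ℝ (fun y => (thickenedIndicator hδ K y : ℝ)) x = 0 := by
  rcases em (x ∈ K) with hxK | hxK
  · refine IsLocalMax.fderiv_eq_zero (.of_forall fun y => ?_)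
    simpa [thickenedIndicator_one hδ K hxK] using thickenedIndicator_le_one hδ K y
  · refine IsLocalMin.fderiv_eq_zero (.of_forall fun y => ?_)
    simp [thickenedIndicator_zero hδ K fun h => hx ⟨h, hxK⟩]

variable {N : ℕ} {K : Set (Euc N)} {ψ : Euc N → Euc N}

theorem integral_thickenedIndicator_mul_divergence_le {δ : ℝ} (hδ : 0 < δ) (hK : IsCompact K)
    (hψ : ContDiff ℝ 1 ψ) (hψc : HasCompactSupport ψ) (hψ1 : ∀ x, ‖ψ x‖ ≤ 1) :
    ∫ x, (thickenedIndicator hδ K x : ℝ) * divergence ψ x ≤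
      volume.real (thickening δ K \ K) / δ := by
  have hLip : LipschitzWith (δ.toNNReal)⁻¹ fun x => (thickenedIndicator hδ K x : ℝ) := fun x y =>
    lipschitzWith_thickenedIndicator hδ K x y
  have hA : MeasurableSet (thickening δ K \ K) :=
    isOpen_thickening.measurableSet.diff hK.measurableSet
  have hAf : volume (thickening δ K \ K) ≠ ∞ :=
    (hK.isBounded.thickening.subset sdiff_subset).measure_lt_top.ne
  have hbound : ∀ x, ‖fderiv ℝ (fun y => (thickenedIndicator hδ K y : ℝ)) x (ψ x)‖ ≤
      (thickening δ K \ K).indicator (fun _ => δ⁻¹) x := fun x => by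
    by_cases hx : x ∈ thickening δ K \ K
    · rw [indicator_of_mem hx]
      simpa [hδ.le] using ContinuousLinearMap.le_of_opNorm_le_of_le _
        (norm_fderiv_le_of_lipschitz ℝ hLip (x₀ := x)) (hψ1 x)
    · rw [indicator_of_notMem hx, fderiv_thickenedIndicator_of_notMem hδ hx, zero_apply, norm_zero]
  rw [integral_mul_divergence_eq_neg hLip hψ hψc]
  calc -∫ x, fderiv ℝ (fun y => (thickenedIndicator hδ K y : ℝ)) x (ψ x)
      ≤ ‖∫ x, fderiv ℝ (fun y => (thickenedIndicator hδ K y : ℝ)) x (ψ x)‖ := neg_le_abs _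
    _ ≤ ∫ x, (thickening δ K \ K).indicator (fun _ => δ⁻¹) x :=
        norm_integral_le_of_norm_le ((integrable_indicator_iff hA).2 (integrableOn_const hAf))
          (.of_forall hbound)
    _ = volume.real (thickening δ K \ K) / δ := by
        rw [integral_indicator hA, setIntegral_const, smul_eq_mul, div_eq_mul_inv]

theorem setIntegral_divergence_le_of_tendsto (hK : IsCompact K) {P : ℝ}
    (hP : Tendsto (fun δ => volume.real (thickening δ K \ K) / δ) (𝓝[>] 0) (𝓝 P))
    (hψ : ContDiff ℝ 1 ψ) (hψc : HasCompactSupport ψ) (hψ1 : ∀ x, ‖ψ x‖ ≤ 1) :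
    ∫ x in K, divergence ψ x ≤ P := by
  have hpos : ∀ k : ℕ, 0 < 1 / ((k : ℝ) + 1) := fun k => by positivity
  have hseq : Tendsto (fun k : ℕ => 1 / ((k : ℝ) + 1)) atTop (𝓝[>] 0) :=
    tendsto_nhdsWithin_iff.2 ⟨tendsto_one_div_add_atTop_nhds_zero_nat, .of_forall hpos⟩
  have hdiv := continuous_divergence hψ
  have hind := tendsto_pi_nhds.1 (thickenedIndicator_tendsto_indicator_closure hpos
    tendsto_one_div_add_atTop_nhds_zero_nat K)
  have hlim : Tendsto (fun k => ∫ x, (thickenedIndicator (hpos k) K x : ℝ) * divergence ψ x) atTop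
      (𝓝 (∫ x, K.indicator (divergence ψ) x)) := by
    refine tendsto_integral_of_dominated_convergence (fun x => ‖divergence ψ x‖) (fun k => ?_)
      (hdiv.integrable_of_hasCompactSupport (hasCompactSupport_divergence hψc)).norm
      (fun k => .of_forall fun x => ?_) (.of_forall fun x => ?_)
    · exact ((NNReal.continuous_coe.comp (thickenedIndicator (hpos k) K).continuous).mul
        hdiv).aestronglyMeasurable
    · rw [norm_mul]
      exact mul_le_of_le_one_left (norm_nonneg _) (by
        simpa using thickenedIndicator_le_one (hpos k) K x)
    · have hx := (NNReal.tendsto_coe.2 (hind x)).mul_const (divergence ψ x)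
      rw [hK.isClosed.closure_eq] at hx
      convert hx using 2
      by_cases hxK : x ∈ K <;> simp [hxK]
  rw [integral_indicator hK.measurableSet] at hlim
  exact le_of_tendsto_of_tendsto' hlim (hP.comp hseq) fun k =>
    integral_thickenedIndicator_mul_divergence_le (hpos k) hK hψ hψc hψ1

theorem mul_mem_upperBounds_TVSet_indicator (hK : IsCompact K) {P : ℝ}
    (hP : Tendsto (fun δ => volume.real (thickening δ K \ K) / δ) (𝓝[>] 0) (𝓝 P)) {c : ℝ}
    (hc : 0 ≤ c) : c * P ∈ upperBounds (TVSet N (K.indicator fun _ => c)) := by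
  refine mem_upperBounds_TVSet.2 fun ψ hψ hψc hψ1 => ?_
  have hind : ∀ x, K.indicator (fun _ => c) x * divergence ψ x =
      K.indicator (fun y => c * divergence ψ y) x := fun x => by
    rw [indicator_mul_left]
  simp only [hind]
  rw [integral_indicator hK.measurableSet, integral_const_mul]
  exact mul_le_mul_of_nonneg_left (setIntegral_divergence_le_of_tendsto hK hP hψ hψc hψ1) hc

theorem tendsto_measureReal_thickening_closedBall_diff_div {E : Type*} [NormedAddCommGroup E]
    [NormedSpace ℝ E] [FiniteDimensional ℝ E] [MeasurableSpace E] [BorelSpace E] (μ : Measure E)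
    [μ.IsAddHaarMeasure] (x : E) {R : ℝ} (hR : 0 ≤ R) :
    Tendsto (fun δ => μ.real (thickening δ (closedBall x R) \ closedBall x R) / δ) (𝓝[>] 0)
      (𝓝 (finrank ℝ E * R ^ (finrank ℝ E - 1) * μ.real (ball 0 1))) := by
  refine (((hasDerivAt_pow (finrank ℝ E) R).tendsto_slope_zero_right).mul_const
    (μ.real (ball 0 1))).congr' ?_
  filter_upwards [self_mem_nhdsWithin] with δ (hδ : 0 < δ)
  have hball : μ.real (ball x (δ + R)) = (δ + R) ^ finrank ℝ E * μ.real (ball 0 1) := by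
    rw [measureReal_def, Measure.addHaar_ball_of_pos μ x (by linarith), ENNReal.toReal_mul,
      ENNReal.toReal_ofReal (by positivity), measureReal_def]
  rw [thickening_closedBall hδ hR, measureReal_sdiff (closedBall_subset_ball (by linarith))
    measurableSet_closedBall, hball, Measure.addHaar_real_closedBall μ x hR, add_comm δ R,
    smul_eq_mul]
  ring

end Minkowski

section Ball

theorem measureReal_ball_pos {E : Type*} [PseudoMetricSpace E] [ProperSpace E] [MeasurableSpace E]
    (μ : Measure E) [μ.IsOpenPosMeasure] [IsFiniteMeasureOnCompacts μ] (x : E) {r : ℝ}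
    (hr : 0 < r) : 0 < μ.real (ball x r) :=
  ENNReal.toReal_pos (measure_ball_pos μ x hr).ne' measure_ball_lt_top.ne

theorem toReal_isoperimetricConst_mul_measureReal_closedBall_rpow {E : Type*}
    [NormedAddCommGroup E] [NormedSpace ℝ E] [FiniteDimensional ℝ E] [MeasurableSpace E]
    [BorelSpace E] (μ : Measure E) [μ.IsAddHaarMeasure] {p : ℝ}
    (hp : (finrank ℝ E : ℝ).HolderConjugate p) (x : E) {R : ℝ} (hR : 0 < R) :
    (isoperimetricConst μ).toReal * μ.real (closedBall x R) ^ p⁻¹ =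
      finrank ℝ E * R ^ (finrank ℝ E - 1) * μ.real (ball 0 1) := by
  have hn : finrank ℝ E ≠ 0 := Nat.cast_ne_zero.1 hp.ne_zero
  have hω : 0 < μ.real (ball 0 1) := measureReal_ball_pos μ 0 one_pos
  have hRn : R ^ finrank ℝ E = R ^ (finrank ℝ E - 1) * R := by
    rw [← pow_succ, Nat.sub_one_add_one hn]
  rw [Measure.addHaar_real_closedBall μ x hR.le, ← hp.one_sub_inv, Real.rpow_sub (by positivity),
    Real.rpow_one, Real.mul_rpow (by positivity) hω.le, Real.pow_rpow_inv_natCast hR.le hn,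
    isoperimetricConst, ENNReal.toReal_mul, ENNReal.toReal_natCast, ← ENNReal.toReal_rpow,
    ← measureReal_def, hRn]
  field_simp

variable {N : ℕ} {p : ℝ}

theorem nrmq_indicator_const {A : Set (Euc N)} (hA : MeasurableSet A) (hp : 0 < p) {c : ℝ}
    (hc : 0 ≤ c) : nrmq N p (A.indicator fun _ => c) = c * volume.real A ^ p⁻¹ := by
  rw [nrmq, eLpNorm_indicator_const hA (by simpa using hp) (by simp), ENNReal.toReal_ofReal hp.le,
    ENNReal.toReal_mul, ← ENNReal.toReal_rpow, ← measureReal_def, one_div, toReal_enorm,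
    Real.norm_of_nonneg hc]

theorem nrm1_indicator_const {A : Set (Euc N)} (hA : MeasurableSet A) {c : ℝ} (hc : 0 ≤ c) :
    nrm1 N (A.indicator fun _ => c) = c * volume.real A := by
  simpa [nrm1, nrmq] using nrmq_indicator_const hA one_pos hc

theorem toReal_isoperimetricConst_mul_nrmq_le_tv (hp : (N : ℝ).HolderConjugate p) {u : Euc N → ℝ}
    (hu : MemBV N u) :
    (isoperimetricConst (volume : Measure (Euc N))).toReal * nrmq N p u ≤ tv N u := by
  rw [nrmq, ← ENNReal.toReal_mul]
  exact ENNReal.toReal_le_of_le_ofReal (tv_nonneg u)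
    (isoperimetricConst_mul_eLpNorm_le_ofReal_tv hp hu)

variable (x : Euc N) {R c : ℝ}

theorem mem_upperBounds_TVSet_indicator_closedBall (hR : 0 ≤ R) (hc : 0 ≤ c) :
    c * (N * R ^ (N - 1) * volume.real (ball (0 : Euc N) 1)) ∈
      upperBounds (TVSet N ((closedBall x R).indicator fun _ => c)) := by
  have hP := tendsto_measureReal_thickening_closedBall_diff_div volume x hR
  rw [finrank_euclideanSpace_fin] at hP
  exact mul_mem_upperBounds_TVSet_indicator (isCompact_closedBall x R) hP hc

theorem memBV_indicator_closedBall (hR : 0 ≤ R) (hc : 0 ≤ c) :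
    MemBV N ((closedBall x R).indicator fun _ => c) :=
  ⟨(integrable_indicator_iff measurableSet_closedBall).2
    (integrableOn_const measure_closedBall_lt_top.ne),
    _, mem_upperBounds_TVSet_indicator_closedBall x hR hc⟩

theorem toReal_isoperimetricConst_mul_nrmq_indicator_closedBall (hp : (N : ℝ).HolderConjugate p)
    (hR : 0 < R) (hc : 0 ≤ c) :
    (isoperimetricConst (volume : Measure (Euc N))).toReal *
        nrmq N p ((closedBall x R).indicator fun _ => c) =
      c * (N * R ^ (N - 1) * volume.real (ball (0 : Euc N) 1)) := by
  have h := toReal_isoperimetricConst_mul_measureReal_closedBall_rpow (E := Euc N) volume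
    (by rwa [finrank_euclideanSpace_fin]) x hR
  rw [finrank_euclideanSpace_fin] at h
  rw [nrmq_indicator_const measurableSet_closedBall hp.symm.pos hc, mul_left_comm, h]

theorem tv_indicator_closedBall (hp : (N : ℝ).HolderConjugate p) (hR : 0 < R) (hc : 0 ≤ c) :
    tv N ((closedBall x R).indicator fun _ => c) =
      c * (N * R ^ (N - 1) * volume.real (ball (0 : Euc N) 1)) := by
  refine le_antisymm (tv_le_of_mem_upperBounds
    (mem_upperBounds_TVSet_indicator_closedBall x hR.le hc)) ?_
  rw [← toReal_isoperimetricConst_mul_nrmq_indicator_closedBall x hp hR hc]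
  exact toReal_isoperimetricConst_mul_nrmq_le_tv hp (memBV_indicator_closedBall x hR.le hc)

theorem exists_memBV_tv_eq_nrm1_eq (hp : (N : ℝ).HolderConjugate p) {P Q : ℝ} (hP : 0 < P)
    (hQ : 0 < Q) :
    ∃ u : Euc N → ℝ, MemBV N u ∧ tv N u = P ∧ nrm1 N u = Q ∧
      (isoperimetricConst (volume : Measure (Euc N))).toReal * nrmq N p u = P := by
  have hN : 0 < (N : ℝ) := hp.pos
  set R := N * Q / P
  have hR : 0 < R := by positivity
  set B := closedBall (0 : Euc N) R
  have hω : 0 < volume.real (ball (0 : Euc N) 1) := measureReal_ball_pos volume 0 one_pos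
  have hB : volume.real B = R ^ (N - 1) * R * volume.real (ball (0 : Euc N) 1) := by
    rw [Measure.addHaar_real_closedBall _ _ hR.le, finrank_euclideanSpace_fin, ← pow_succ,
      Nat.sub_one_add_one (Nat.cast_pos.1 hN).ne']
  have hc : 0 ≤ Q / volume.real B := by positivity
  have hcP : Q / volume.real B * (N * R ^ (N - 1) * volume.real (ball (0 : Euc N) 1)) = P := by
    have hRP : R * P = N * Q := div_mul_cancel₀ _ hP.ne'
    rw [hB]
    field_simp
    linarith
  refine ⟨B.indicator fun _ => Q / volume.real B, memBV_indicator_closedBall 0 hR.le hc,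
    (tv_indicator_closedBall 0 hp hR hc).trans hcP, ?_,
    (toReal_isoperimetricConst_mul_nrmq_indicator_closedBall 0 hp hR hc).trans hcP⟩
  rw [nrm1_indicator_const measurableSet_closedBall hc]
  exact div_mul_cancel₀ _ (by rw [hB]; positivity)

end Ball

/-! ### The two suprema -/

section Profile

/-- The function `h` of the paper, with `q` in place of `1*`: the value of
`‖u‖₁ / (1 - ‖u‖_{TV}^q)` on the constraint set as a function of
`t = ‖u‖_{TV}^a / ‖u‖₁^b`. -/
def constraintProfile (a b q t : ℝ) : ℝ :=
  (1 + t) ^ (q / a - 1 / b) / ((1 + t) ^ (q / a) - t ^ (q / a))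

variable {a b P Q : ℝ}

theorem constraintProfile_div (ha : 0 < a) (hb : 0 < b) (q : ℝ) (hP : 0 < P) (hQ : 0 < Q)
    (h : P ^ a + Q ^ b = 1) : constraintProfile a b q (P ^ a / Q ^ b) = Q / (1 - P ^ q) := by
  have hQb : 0 < Q ^ b := by positivity
  have h_one_add : 1 + P ^ a / Q ^ b = (Q ^ b)⁻¹ := by
    rw [one_add_div hQb.ne', add_comm, h, one_div]
  have h_num : ((Q ^ b)⁻¹) ^ (1 / b) = Q⁻¹ := by
    rw [Real.inv_rpow hQb.le, one_div, Real.rpow_rpow_inv hQ.le hb.ne']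
  have h_den : (P ^ a / Q ^ b) ^ (q / a) = P ^ q * ((Q ^ b)⁻¹) ^ (q / a) := by
    rw [div_eq_mul_inv, Real.mul_rpow (by positivity) (by positivity), ← Real.rpow_mul hP.le,
      mul_div_cancel₀ q ha.ne']
  have h_pos : 0 < ((Q ^ b)⁻¹) ^ (q / a) := by positivity
  rw [constraintProfile, h_one_add, h_den, Real.rpow_sub (by positivity), h_num, ← one_sub_mul,
    div_inv_eq_mul, mul_comm (1 - P ^ q), mul_div_mul_left _ _ h_pos.ne']

theorem exists_rpow_add_rpow_eq_one_and_div_eq (ha : a ≠ 0) (hb : b ≠ 0) {t : ℝ} (ht : 0 < t) :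
    ∃ P Q : ℝ, 0 < P ∧ 0 < Q ∧ P ^ a + Q ^ b = 1 ∧ P ^ a / Q ^ b = t := by
  refine ⟨(t / (1 + t)) ^ a⁻¹, (1 / (1 + t)) ^ b⁻¹, by positivity, by positivity, ?_⟩
  rw [Real.rpow_inv_rpow (by positivity) ha, Real.rpow_inv_rpow (by positivity) hb]
  exact ⟨by field_simp; ring, by field_simp⟩

theorem pos_and_lt_one_of_rpow_add_rpow_eq_one (ha : 0 < a) (hb : 0 < b) (hP : 0 ≤ P)
    (hQ : 0 ≤ Q) (hPQ : P = 0 ↔ Q = 0) (h : P ^ a + Q ^ b = 1) : 0 < P ∧ P < 1 ∧ 0 < Q := by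
  have hQ0 : Q ≠ 0 := fun hQ0 => by
    simp [hQ0, hPQ.2 hQ0, ha.ne', hb.ne'] at h
  have hQpos : 0 < Q := hQ.lt_of_ne' hQ0
  refine ⟨hP.lt_of_ne' (mt hPQ.1 hQ0), ?_, hQpos⟩
  by_contra! hP1
  linarith [Real.one_le_rpow hP1 ha.le, Real.rpow_pos_of_pos hQpos b]

end Profile

section Constraint

/-- Mazya's best constant `E` in `‖u‖_{1*}^{1*} ≤ E ‖u‖_{TV}^{1*}`. -/
def mazyaConst (N : ℕ) : ℝ :=
  (1 / ((N : ℝ) ^ (N - 1) * omegaS N)) ^ (1 / ((N : ℝ) - 1))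

variable {N : ℕ} {p : ℝ}

theorem mazyaConst_mul_toReal_isoperimetricConst_rpow (hp : (N : ℝ).HolderConjugate p) :
    mazyaConst N * (isoperimetricConst (volume : Measure (Euc N))).toReal ^ p = 1 := by
  have hN : 0 < (N : ℝ) := hp.pos
  set ω := volume.real (ball (0 : Euc N) 1)
  have hω : 0 < ω := measureReal_ball_pos volume 0 one_pos
  have hκ : (isoperimetricConst (volume : Measure (Euc N))).toReal = N * ω ^ (N : ℝ)⁻¹ := by
    rw [isoperimetricConst, finrank_euclideanSpace_fin, ENNReal.toReal_mul,
      ENNReal.toReal_natCast, ← ENNReal.toReal_rpow, ← measureReal_def]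
  have hκN : (N : ℝ) ^ (N - 1) * omegaS N = (N * ω ^ (N : ℝ)⁻¹) ^ (N : ℝ) := by
    rw [Real.mul_rpow hN.le (by positivity), Real.rpow_inv_rpow hω.le hN.ne', Real.rpow_natCast,
      omegaS, ← measureReal_def, ← mul_assoc, ← pow_succ,
      Nat.sub_one_add_one (Nat.cast_pos.1 hN).ne']
  rw [mazyaConst, hκ, hκN, one_div, Real.inv_rpow (by positivity), ← Real.rpow_mul (by positivity),
    mul_one_div, ← hp.conjugate_eq]
  exact inv_mul_cancel₀ (by positivity)

theorem mazyaConst_pos (hp : (N : ℝ).HolderConjugate p) : 0 < mazyaConst N :=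
  pos_of_mul_pos_left (by rw [mazyaConst_mul_toReal_isoperimetricConst_rpow hp]; exact one_pos)
    (by positivity)

theorem nrmq_rpow_eq_mazyaConst_mul (hp : (N : ℝ).HolderConjugate p) (u : Euc N → ℝ) :
    nrmq N p u ^ p = mazyaConst N *
      ((isoperimetricConst (volume : Measure (Euc N))).toReal * nrmq N p u) ^ p := by
  have hnn : 0 ≤ nrmq N p u := ENNReal.toReal_nonneg
  rw [Real.mul_rpow ENNReal.toReal_nonneg hnn, ← mul_assoc,
    mazyaConst_mul_toReal_isoperimetricConst_rpow hp, one_mul]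

variable {u : Euc N → ℝ}

theorem nrmq_rpow_le_mazyaConst_mul_tv_rpow (hp : (N : ℝ).HolderConjugate p) (hu : MemBV N u) :
    nrmq N p u ^ p ≤ mazyaConst N * tv N u ^ p := by
  rw [nrmq_rpow_eq_mazyaConst_mul hp]
  exact mul_le_mul_of_nonneg_left
    (Real.rpow_le_rpow (mul_nonneg ENNReal.toReal_nonneg ENNReal.toReal_nonneg)
      (toReal_isoperimetricConst_mul_nrmq_le_tv hp hu) hp.symm.nonneg) (mazyaConst_pos hp).le

theorem nrm1_eq_zero_iff (hu : Integrable u) : nrm1 N u = 0 ↔ u =ᵐ[volume] 0 := by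
  rw [nrm1, ENNReal.toReal_eq_zero_iff,
    or_iff_left (memLp_one_iff_integrable.2 hu).eLpNorm_ne_top,
    eLpNorm_eq_zero_iff hu.aestronglyMeasurable one_ne_zero]

theorem tv_eq_zero_iff (hp : (N : ℝ).HolderConjugate p) (hu : MemBV N u) :
    tv N u = 0 ↔ u =ᵐ[volume] 0 := by
  refine ⟨fun h => ?_, fun h => (tv_nonneg u).antisymm' (tv_le_of_mem_upperBounds
    (mem_upperBounds_TVSet.2 fun ψ _ _ _ => (integral_eq_zero_of_ae ?_).le))⟩
  · have hsob := isoperimetricConst_mul_eLpNorm_le_ofReal_tv hp hu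
    have hκ : isoperimetricConst (volume : Measure (Euc N)) ≠ 0 := fun h0 => by
      simpa [h0, hp.symm.ne_zero] using mazyaConst_mul_toReal_isoperimetricConst_rpow hp
    rw [h, ENNReal.ofReal_zero, nonpos_iff_eq_zero, mul_eq_zero, or_iff_right hκ,
      eLpNorm_eq_zero_iff hu.1.aestronglyMeasurable (by simpa using hp.symm.pos)] at hsob
    exact hsob
  · filter_upwards [h] with x hx
    simp [hx]

theorem tv_pos_and_lt_one_and_nrm1_pos {a b : ℝ} (hp : (N : ℝ).HolderConjugate p) (ha : 0 < a)
    (hb : 0 < b) (hu : MemBV N u) (h : tv N u ^ a + nrm1 N u ^ b = 1) :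
    0 < tv N u ∧ tv N u < 1 ∧ 0 < nrm1 N u :=
  pos_and_lt_one_of_rpow_add_rpow_eq_one ha hb (tv_nonneg u) ENNReal.toReal_nonneg
    ((tv_eq_zero_iff hp hu).trans (nrm1_eq_zero_iff hu.1).symm) h

theorem mazyaConst_mul_one_sub_tv_rpow_le (hp : (N : ℝ).HolderConjugate p) (hu : MemBV N u) :
    mazyaConst N * (1 - tv N u ^ p) ≤ mazyaConst N - nrmq N p u ^ p := by
  rw [mul_one_sub]
  exact sub_le_sub_left (nrmq_rpow_le_mazyaConst_mul_tv_rpow hp hu) _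

theorem mazyaConst_mul_one_sub_tv_rpow_pos {a b : ℝ} (hp : (N : ℝ).HolderConjugate p)
    (ha : 0 < a) (hb : 0 < b) (hu : MemBV N u) (h : tv N u ^ a + nrm1 N u ^ b = 1) :
    0 < mazyaConst N * (1 - tv N u ^ p) :=
  have ⟨hP, hP1, _⟩ := tv_pos_and_lt_one_and_nrm1_pos hp ha hb hu h
  mul_pos (mazyaConst_pos hp) (sub_pos.2 (Real.rpow_lt_one hP.le hP1 hp.symm.pos))

theorem exists_nrm1_div_le_mul_constraintProfile {a b : ℝ} (hp : (N : ℝ).HolderConjugate p)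
    (ha : 0 < a) (hb : 0 < b) (hu : MemBV N u) (h : tv N u ^ a + nrm1 N u ^ b = 1) :
    ∃ t, 0 < t ∧ nrm1 N u / (mazyaConst N - nrmq N p u ^ p) ≤
      1 / mazyaConst N * constraintProfile a b p t := by
  obtain ⟨hP, -, hQ⟩ := tv_pos_and_lt_one_and_nrm1_pos hp ha hb hu h
  refine ⟨tv N u ^ a / nrm1 N u ^ b, by positivity, ?_⟩
  rw [constraintProfile_div ha hb p hP hQ h, div_mul_div_comm, one_mul]
  exact div_le_div_of_nonneg_left hQ.le (mazyaConst_mul_one_sub_tv_rpow_pos hp ha hb hu h)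
    (mazyaConst_mul_one_sub_tv_rpow_le hp hu)

theorem exists_nrm1_div_eq_mul_constraintProfile {a b : ℝ} (hp : (N : ℝ).HolderConjugate p)
    (ha : 0 < a) (hb : 0 < b) {t : ℝ} (ht : 0 < t) :
    ∃ u : Euc N → ℝ, MemBV N u ∧ tv N u ^ a + nrm1 N u ^ b = 1 ∧
      nrm1 N u / (mazyaConst N - nrmq N p u ^ p) =
        1 / mazyaConst N * constraintProfile a b p t := by
  obtain ⟨P, Q, hP, hQ, hPQ, rfl⟩ := exists_rpow_add_rpow_eq_one_and_div_eq ha.ne' hb.ne' ht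
  obtain ⟨u, hu, rfl, rfl, hsharp⟩ := exists_memBV_tv_eq_nrm1_eq hp hP hQ
  refine ⟨u, hu, hPQ, ?_⟩
  rw [constraintProfile_div ha hb p hP hQ hPQ, nrmq_rpow_eq_mazyaConst_mul hp, hsharp,
    ← mul_one_sub, div_mul_div_comm, one_mul]

end Constraint

/-- `α_c = (1/E) sup_{t>0} h(t)`, and on the constraint set the
denominator `E - ‖u‖_{1*}^{1*}` is bounded below by `E(1-‖u‖_{TV}^{1*}) > 0`. -/
theorem alphac_eq_sup_h (N : ℕ) (hN : 2 ≤ N) (a b : ℝ) (ha : 0 < a) (hb : 0 < b) :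
    (sSup { r | ∃ u : Euc N → ℝ, MemBV N u ∧ tv N u ^ a + nrm1 N u ^ b = 1 ∧
        r = nrm1 N u /
          ((1 / ((N : ℝ) ^ (N - 1) * omegaS N)) ^ (1/((N:ℝ)-1)) -
            nrmq N ((N:ℝ)/((N:ℝ)-1)) u ^ ((N:ℝ)/((N:ℝ)-1))) } =
    (1 / (1 / ((N : ℝ) ^ (N - 1) * omegaS N)) ^ (1/((N:ℝ)-1))) *
      sSup { r | ∃ t : ℝ, 0 < t ∧
        r = (1+t) ^ (((N:ℝ)/((N:ℝ)-1))/a - 1/b) /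
              ((1+t) ^ (((N:ℝ)/((N:ℝ)-1))/a) - t ^ (((N:ℝ)/((N:ℝ)-1))/a)) })
    ∧ ∀ u : Euc N → ℝ, MemBV N u → tv N u ^ a + nrm1 N u ^ b = 1 →
        (1 / ((N : ℝ) ^ (N - 1) * omegaS N)) ^ (1/((N:ℝ)-1)) *
            (1 - tv N u ^ ((N:ℝ)/((N:ℝ)-1))) ≤
          (1 / ((N : ℝ) ^ (N - 1) * omegaS N)) ^ (1/((N:ℝ)-1)) -
            nrmq N ((N:ℝ)/((N:ℝ)-1)) u ^ ((N:ℝ)/((N:ℝ)-1)) ∧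
        0 < (1 / ((N : ℝ) ^ (N - 1) * omegaS N)) ^ (1/((N:ℝ)-1)) *
            (1 - tv N u ^ ((N:ℝ)/((N:ℝ)-1))) := by
  have hp : (N : ℝ).HolderConjugate (N / (N - 1)) := .conjExponent (by exact_mod_cast hN)
  refine ⟨?_, fun u hu h => ⟨mazyaConst_mul_one_sub_tv_rpow_le hp hu,
    mazyaConst_mul_one_sub_tv_rpow_pos hp ha hb hu h⟩⟩
  refine (csSup_eq_csSup_of_forall_exists_le ?_ ?_).trans
    (Real.sSup_smul_of_nonneg (one_div_nonneg.2 (mazyaConst_pos hp).le) _)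
  · rintro _ ⟨u, hu, h, rfl⟩
    obtain ⟨t, ht, hle⟩ := exists_nrm1_div_le_mul_constraintProfile hp ha hb hu h
    exact ⟨_, smul_mem_smul_set ⟨t, ht, rfl⟩, hle⟩
  · rintro _ ⟨_, ⟨t, ht, rfl⟩, rfl⟩
    obtain ⟨u, hu, h, heq⟩ := exists_nrm1_div_eq_mul_constraintProfile hp ha hb ht
    exact ⟨_, ⟨u, hu, h, rfl⟩, heq.ge⟩
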